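/- arXiv:1608.04575 — 2 statements merged into one kernel-verified Lean document; each statement's English description precedes it below -/
import Mathlib

section
/- Let a = (a₁,…,aₙ) ∈ [1,∞)ⁿ. There exist four functions φ₀, φ, ψ₀, ψ ∈ 𝓢(ℝⁿ) supported in the open half-space ℝⁿ₋ = {x ∈ ℝⁿ : xₙ < 0}, with φ and ψ having vanishing moments of all orders, such that for every u ∈ 𝓢'(ℝⁿ) the Calderón reproducing formula u = Σ_{j=0}^∞ ψ_j * (φ_j * u) holds, the series converging in the weak* topology of 𝓢'(ℝⁿ); here ψ_j * (φ_j * u) is the tempered distribution η ↦ ⟨u, (ψ_j*φ_j)̌ * η⟩. -/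
open MeasureTheory Filter Topology

noncomputable section

/-- Anisotropic dilation: `θ_0 = θ₀` and `θ_j(x) = 2^{j|a|} θ(2^{ja}x)` for `j ≥ 1`. -/
def anisoDil {m : ℕ} (a : Fin m → ℝ) (θ₀ θ : (Fin m → ℝ) → ℝ) (j : ℕ)
    (x : Fin m → ℝ) : ℝ :=
  if j = 0 then θ₀ x
  else (2:ℝ) ^ ((j:ℝ) * ∑ i, a i) * θ (fun i => (2:ℝ) ^ ((j:ℝ) * a i) * x i)

/-- `θ` has vanishing moments of all orders: `∫ x^α θ(x) dx = 0` for every multi-index `α`. -/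
def VanishingMoments {m : ℕ} (θ : (Fin m → ℝ) → ℝ) : Prop :=
  ∀ α : Fin m → ℕ, (∫ x : Fin m → ℝ, (∏ i, x i ^ α i) * θ x) = 0

namespace SchwartzMap

section Translates

variable {E : Type*} [NormedAddCommGroup E] [NormedSpace ℝ E]

/-- Weighted form of the Schwartz decay, with a nonnegative constant. -/
theorem exists_one_add_pow_mul_le {F : Type*} [NormedAddCommGroup F] [NormedSpace ℝ F]
    (f : SchwartzMap E F) (k n : ℕ) :
    ∃ C, 0 ≤ C ∧ ∀ x, (1 + ‖x‖) ^ k * ‖iteratedFDeriv ℝ n f x‖ ≤ C := by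
  refine ⟨_, ?_, fun x => one_add_le_sup_seminorm_apply (𝕜 := ℝ) (m := (k, n)) le_rfl le_rfl f x⟩
  exact le_trans (by positivity)
    (one_add_le_sup_seminorm_apply (𝕜 := ℝ) (m := (k, n)) le_rfl le_rfl f 0)

/-- Peetre-type bound for derivatives of translates along a contraction. -/
theorem exists_norm_pow_mul_translate_le {F : Type*} [NormedAddCommGroup F] [NormedSpace ℝ F]
    (f : SchwartzMap E F) (k n : ℕ) :
    ∃ C, 0 ≤ C ∧ ∀ (L : E →L[ℝ] E), ‖L‖ ≤ 1 → ∀ x z,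
      ‖x‖ ^ k * ‖iteratedFDeriv ℝ n f (x + L z)‖ ≤ C * (1 + ‖z‖) ^ k := by
  obtain ⟨C, hC, h⟩ := f.exists_one_add_pow_mul_le k n
  refine ⟨C, hC, fun L hL x z => ?_⟩
  have h1 : ‖L z‖ ≤ ‖z‖ := by
    simpa using (L.le_opNorm z).trans (mul_le_mul_of_nonneg_right hL (norm_nonneg z))
  have h2 : ‖x‖ ≤ ‖x + L z‖ + ‖L z‖ := by simpa using norm_sub_le (x + L z) (L z)
  have h3 : ‖x‖ ≤ (1 + ‖x + L z‖) * (1 + ‖z‖) := by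
    nlinarith [norm_nonneg (x + L z), norm_nonneg z,
      mul_nonneg (norm_nonneg (x + L z)) (norm_nonneg z)]
  calc ‖x‖ ^ k * ‖iteratedFDeriv ℝ n f (x + L z)‖
      ≤ ((1 + ‖x + L z‖) * (1 + ‖z‖)) ^ k * ‖iteratedFDeriv ℝ n f (x + L z)‖ := by gcongr
    _ = ((1 + ‖x + L z‖) ^ k * ‖iteratedFDeriv ℝ n f (x + L z)‖) * (1 + ‖z‖) ^ k := by
        rw [mul_pow]; ring
    _ ≤ C * (1 + ‖z‖) ^ k := by gcongr; exact h _

theorem exists_norm_pow_mul_translate_sub_le {F : Type*} [NormedAddCommGroup F] [NormedSpace ℝ F]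
    (f : SchwartzMap E F) (k n : ℕ) :
    ∃ C, 0 ≤ C ∧ ∀ (L : E →L[ℝ] E), ‖L‖ ≤ 1 → ∀ x z,
      ‖x‖ ^ k * ‖iteratedFDeriv ℝ n f (x + L z) - iteratedFDeriv ℝ n f x‖
        ≤ ‖L‖ * (C * (1 + ‖z‖) ^ (k + 1)) := by
  obtain ⟨C, hC, h⟩ := f.exists_norm_pow_mul_translate_le k (n + 1)
  refine ⟨C, hC, fun L hL x z => ?_⟩
  have hd : Differentiable ℝ (fun y => ‖x‖ ^ k • iteratedFDeriv ℝ n f y) :=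
    Differentiable.fun_const_smul
      ((f.smooth ⊤).differentiable_iteratedFDeriv (by exact_mod_cast WithTop.coe_lt_top n)) _
  have key := Convex.norm_image_sub_le_of_norm_fderiv_le (𝕜 := ℝ)
    (f := fun y => ‖x‖ ^ k • iteratedFDeriv ℝ n f y) (C := C * (1 + ‖z‖) ^ k)
    (s := segment ℝ x (x + L z)) (x := x) (y := x + L z) (fun y _ => hd y) ?_
    (convex_segment _ _) (left_mem_segment _ _ _) (right_mem_segment _ _ _)
  · rw [← smul_sub, norm_smul, norm_pow, norm_norm] at key
    refine key.trans ?_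
    have h1 : ‖x + L z - x‖ ≤ ‖L‖ * (1 + ‖z‖) := by
      rw [add_sub_cancel_left]
      exact (L.le_opNorm z).trans (by gcongr; linarith)
    calc C * (1 + ‖z‖) ^ k * ‖x + L z - x‖ ≤ C * (1 + ‖z‖) ^ k * (‖L‖ * (1 + ‖z‖)) := by gcongr
      _ = _ := by ring
  · intro y hy
    rw [segment_eq_image'] at hy
    obtain ⟨t, ⟨ht0, ht1⟩, rfl⟩ := hy
    have hdd : DifferentiableAt ℝ (iteratedFDeriv ℝ n f) (x + t • (x + L z - x)) :=
      (f.smooth ⊤).differentiable_iteratedFDeriv (by exact_mod_cast WithTop.coe_lt_top n) _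
    rw [fderiv_fun_const_smul hdd, norm_smul, norm_pow, norm_norm, norm_fderiv_iteratedFDeriv,
      add_sub_cancel_left]
    refine h (t • L) ?_ x z
    rw [norm_smul, Real.norm_of_nonneg ht0]
    exact mul_le_one₀ ht1 (norm_nonneg _) hL

theorem continuous_iteratedFDeriv {F : Type*} [NormedAddCommGroup F] [NormedSpace ℝ F]
    (f : SchwartzMap E F) (n : ℕ) : Continuous (iteratedFDeriv ℝ n f) :=
  (f.smooth ⊤).continuous_iteratedFDeriv (by exact_mod_cast le_top)

variable [MeasurableSpace E] [BorelSpace E] [SecondCountableTopology E]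
  {μ : Measure E} [μ.HasTemperateGrowth]

theorem integrable_one_add_pow_mul (f : SchwartzMap E ℝ) (k : ℕ) :
    Integrable (fun x => (1 + ‖x‖) ^ k * ‖f x‖) μ := by
  refine Integrable.mono' (g := fun x => 2 ^ (k - 1) * (‖x‖ ^ 0 * ‖f x‖ + ‖x‖ ^ k * ‖f x‖))
    (((f.integrable_pow_mul μ 0).add (f.integrable_pow_mul μ k)).const_mul _)
    (by have := f.continuous; fun_prop) (ae_of_all _ fun x => ?_)
  rw [Real.norm_of_nonneg (by positivity)]
  have := add_pow_le (zero_le_one (α := ℝ)) (norm_nonneg x) k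
  calc (1 + ‖x‖) ^ k * ‖f x‖ ≤ (2 ^ (k - 1) * (1 ^ k + ‖x‖ ^ k)) * ‖f x‖ := by gcongr
    _ = _ := by simp; ring

theorem integrable_smul_iteratedFDeriv_translate (T η : SchwartzMap E ℝ) (L : E →L[ℝ] E)
    (hL : ‖L‖ ≤ 1) (n : ℕ) (x : E) :
    Integrable (fun z => T z • iteratedFDeriv ℝ n η (x + L z)) μ := by
  obtain ⟨C, -, h⟩ := η.exists_norm_pow_mul_translate_le 0 n
  have h1 := T.continuous
  have h2 := η.continuous_iteratedFDeriv n
  refine Integrable.mono' (g := fun z => C * ‖T z‖) (T.integrable.norm.const_mul C)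
    (Continuous.aestronglyMeasurable (by fun_prop)) (ae_of_all _ fun z => ?_)
  rw [norm_smul, mul_comm]
  gcongr
  simpa using h L hL x z

theorem hasFDerivAt_integral_iteratedFDeriv_translate (T η : SchwartzMap E ℝ) (L : E →L[ℝ] E)
    (hL : ‖L‖ ≤ 1) (n : ℕ) (x : E) :
    HasFDerivAt (fun x => ∫ z, T z • iteratedFDeriv ℝ n η (x + L z) ∂μ)
      (∫ z, T z • fderiv ℝ (iteratedFDeriv ℝ n η) (x + L z) ∂μ) x := by
  obtain ⟨C, -, h⟩ := η.exists_norm_pow_mul_translate_le 0 (n + 1)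
  have h1 := T.continuous
  have h2 := η.continuous_iteratedFDeriv n
  have h3 : Continuous (fderiv ℝ (iteratedFDeriv ℝ n η)) :=
    ((η.smooth ⊤).iteratedFDeriv_right (m := 1) (i := n) (by exact_mod_cast le_top)
      ).continuous_fderiv
      (by simp)
  refine hasFDerivAt_integral_of_dominated_of_fderiv_le (s := Set.univ)
    (bound := fun z => C * ‖T z‖)
    (F := fun y z => T z • iteratedFDeriv ℝ n η (y + L z))
    (F' := fun y z => T z • fderiv ℝ (iteratedFDeriv ℝ n η) (y + L z))
    univ_mem (Eventually.of_forall fun y => Continuous.aestronglyMeasurable (by fun_prop))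
    (integrable_smul_iteratedFDeriv_translate T η L hL n x)
    (Continuous.aestronglyMeasurable (by fun_prop)) (ae_of_all _ fun z y _ => ?_)
    (T.integrable.norm.const_mul C) (ae_of_all _ fun z y _ => ?_)
  · rw [norm_smul, mul_comm, norm_fderiv_iteratedFDeriv]
    gcongr
    simpa using h L hL y z
  · have hd : DifferentiableAt ℝ (iteratedFDeriv ℝ n η) (y + L z) :=
      (η.smooth ⊤).differentiable_iteratedFDeriv (by exact_mod_cast WithTop.coe_lt_top n) _
    exact ((hasFDerivAt_comp_add_right (L z)).2 hd.hasFDerivAt).const_smul (T z)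

theorem iteratedFDeriv_integral_translate (T η : SchwartzMap E ℝ) (L : E →L[ℝ] E)
    (hL : ‖L‖ ≤ 1) (n : ℕ) :
    iteratedFDeriv ℝ n (fun x => ∫ z, T z * η (x + L z) ∂μ)
      = fun x => ∫ z, T z • iteratedFDeriv ℝ n η (x + L z) ∂μ := by
  induction n with
  | zero =>
    ext1 x
    simp only [iteratedFDeriv_zero_eq_comp, Function.comp_apply, ← map_smul]
    exact ((continuousMultilinearCurryFin0 ℝ E ℝ).symm.toContinuousLinearEquiv.integral_comp_comm
      (𝕜 := ℝ) (fun z => T z • η (x + L z))).symm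
  | succ n ih =>
    ext1 x
    rw [iteratedFDeriv_succ_eq_comp_left, ih, Function.comp_apply,
      (hasFDerivAt_integral_iteratedFDeriv_translate T η L hL n x).fderiv,
      iteratedFDeriv_succ_eq_comp_left]
    simp only [Function.comp_apply, ← map_smul]
    exact ((continuousMultilinearCurryLeftEquiv ℝ (fun _ => E) ℝ).symm.toContinuousLinearEquiv.integral_comp_comm
      (𝕜 := ℝ) (fun z => T z • fderiv ℝ (iteratedFDeriv ℝ n η) (x + L z))).symm

theorem contDiff_integral_translate (T η : SchwartzMap E ℝ) (L : E →L[ℝ] E) (hL : ‖L‖ ≤ 1) :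
    ContDiff ℝ (⊤ : ℕ∞) (fun x => ∫ z, T z * η (x + L z) ∂μ) := by
  refine contDiff_of_differentiable_iteratedFDeriv fun n _ => ?_
  rw [iteratedFDeriv_integral_translate T η L hL n]
  exact fun x => (hasFDerivAt_integral_iteratedFDeriv_translate T η L hL n x).differentiableAt

theorem integrable_mul_translate (T η : SchwartzMap E ℝ) (L : E →L[ℝ] E) (x : E) :
    Integrable (fun z => T z * η (x + L z)) μ := by
  have h := η.continuous
  refine T.integrable.mul_bdd (Continuous.aestronglyMeasurable (by fun_prop))
    (ae_of_all _ fun z => η.norm_le_seminorm ℝ (x + L z))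

variable (μ) in
/-- The Schwartz function `x ↦ ∫ T z * η (x + L z) dz` for a linear contraction `L`. -/
def translateAverageAux (L : E →L[ℝ] E) (hL : ‖L‖ ≤ 1) (T η : SchwartzMap E ℝ) :
    SchwartzMap E ℝ where
  toFun x := ∫ z, T z * η (x + L z) ∂μ
  smooth' := contDiff_integral_translate T η L hL
  decay' k n := by
    obtain ⟨C, -, h⟩ := η.exists_norm_pow_mul_translate_le k n
    refine ⟨∫ z, C * ((1 + ‖z‖) ^ k * ‖T z‖) ∂μ, fun x => ?_⟩
    rw [iteratedFDeriv_integral_translate T η L hL n, ← norm_norm x, ← norm_pow, ← norm_smul,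
      ← integral_smul]
    refine norm_integral_le_of_norm_le ((T.integrable_one_add_pow_mul k).const_mul C)
      (ae_of_all _ fun z => ?_)
    rw [smul_comm, norm_smul, norm_smul, norm_pow, norm_norm, ← mul_assoc C, mul_comm ‖T z‖]
    exact mul_le_mul_of_nonneg_right (h L hL x z) (norm_nonneg _)

variable (μ) in
/-- The bilinear map sending `T`, `η` to `x ↦ ∫ T z * η (x + L z) dz`, for a linear
contraction `L`. -/
def translateAverage (L : E →L[ℝ] E) (hL : ‖L‖ ≤ 1) :
    SchwartzMap E ℝ →ₗ[ℝ] SchwartzMap E ℝ →ₗ[ℝ] SchwartzMap E ℝ :=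
  LinearMap.mk₂ ℝ (translateAverageAux μ L hL)
    (fun T₁ T₂ η => by
      ext x
      refine Eq.trans ?_ (integral_add (integrable_mul_translate T₁ η L x)
        (integrable_mul_translate T₂ η L x))
      exact integral_congr_ae (ae_of_all _ fun z => add_mul _ _ _))
    (fun c T η => by
      ext x
      refine Eq.trans ?_ (integral_const_mul c _)
      exact integral_congr_ae (ae_of_all _ fun z => mul_assoc c (T z) (η (x + L z))))
    (fun T η₁ η₂ => by
      ext x
      refine Eq.trans ?_ (integral_add (integrable_mul_translate T η₁ L x)
        (integrable_mul_translate T η₂ L x))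
      exact integral_congr_ae (ae_of_all _ fun z => mul_add _ _ _))
    (fun c T η => by
      ext x
      refine Eq.trans ?_ (integral_const_mul c _)
      exact integral_congr_ae (ae_of_all _ fun z => mul_left_comm (T z) c (η (x + L z))))

@[simp]
theorem translateAverage_apply (L : E →L[ℝ] E) (hL : ‖L‖ ≤ 1) (T η : SchwartzMap E ℝ) (x : E) :
    translateAverage μ L hL T η x = ∫ z, T z * η (x + L z) ∂μ := rfl

/-- Averages against a Schwartz function of integral one along contractions tending to zero form an
approximate identity in the Schwartz topology. -/
theorem tendsto_translateAverage {ι : Type*} {l : Filter ι} (T η : SchwartzMap E ℝ)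
    (hT : ∫ z, T z ∂μ = 1) (L : ι → E →L[ℝ] E) (hL : ∀ i, ‖L i‖ ≤ 1)
    (hlim : Tendsto (fun i => ‖L i‖) l (𝓝 0)) :
    Tendsto (fun i => translateAverage μ (L i) (hL i) T η) l (𝓝 η) := by
  rw [(schwartz_withSeminorms ℝ E ℝ).tendsto_nhds]
  rintro ⟨k, n⟩ ε hε
  obtain ⟨C, hC, h⟩ := η.exists_norm_pow_mul_translate_sub_le k n
  set I := ∫ z, C * ((1 + ‖z‖) ^ (k + 1) * ‖T z‖) ∂μ with hI
  have hI0 : 0 ≤ I := integral_nonneg fun z => by positivity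
  have hbound : ∀ i, SchwartzMap.seminorm ℝ k n (translateAverage μ (L i) (hL i) T η - η)
      ≤ ‖L i‖ * I := by
    refine fun i => seminorm_le_bound ℝ k n _ (by positivity) fun x => ?_
    have hsub : iteratedFDeriv ℝ n (translateAverage μ (L i) (hL i) T η - η) x
        = ∫ z, T z • (iteratedFDeriv ℝ n η (x + L i z) - iteratedFDeriv ℝ n η x) ∂μ := by
      simp_rw [smul_sub]
      rw [integral_sub (integrable_smul_iteratedFDeriv_translate T η (L i) (hL i) n x)
        (T.integrable.smul_const _), integral_smul_const, hT, one_smul]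
      have : ⇑(translateAverage μ (L i) (hL i) T η - η)
        = (fun x => ∫ z, T z * η (x + L i z) ∂μ) - ⇑η := rfl
      rw [this, iteratedFDeriv_sub_apply
        ((contDiff_integral_translate T η (L i) (hL i)).contDiffAt.of_le (by exact_mod_cast le_top))
        ((η.smooth ⊤).contDiffAt.of_le (by exact_mod_cast le_top)),
        iteratedFDeriv_integral_translate T η (L i) (hL i) n]
    rw [hsub, ← norm_norm x, ← norm_pow, ← norm_smul, ← integral_smul, hI, ← integral_const_mul]
    refine norm_integral_le_of_norm_le
      (((T.integrable_one_add_pow_mul (k + 1)).const_mul C).const_mul _) (ae_of_all _ fun z => ?_)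
    rw [smul_comm, norm_smul, norm_smul, norm_pow, norm_norm, ← mul_assoc C,
      ← mul_assoc ‖L i‖, mul_comm ‖T z‖]
    exact mul_le_mul_of_nonneg_right (h (L i) (hL i) x z) (norm_nonneg _)
  have h0 : Tendsto (fun i => ‖L i‖ * I) l (𝓝 0) := by simpa using hlim.mul_const I
  filter_upwards [h0.eventually (gt_mem_nhds hε)] with i hi
  exact (hbound i).trans_lt hi

end Translates

end SchwartzMap

namespace SchwartzMap

section Convolution

variable {m : ℕ}

/-- Convolution of real Schwartz functions on `ℝᵐ`, as a bilinear map. -/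
def conv : SchwartzMap (Fin m → ℝ) ℝ →ₗ[ℝ] SchwartzMap (Fin m → ℝ) ℝ →ₗ[ℝ]
    SchwartzMap (Fin m → ℝ) ℝ :=
  translateAverage volume (-ContinuousLinearMap.id ℝ _)
    (by rw [norm_neg]; exact ContinuousLinearMap.norm_id_le)

theorem conv_apply (f g : SchwartzMap (Fin m → ℝ) ℝ) (x : Fin m → ℝ) :
    conv f g x = ∫ z, f z * g (x - z) := by
  simp [conv, sub_eq_add_neg]

theorem conv_comm (f g : SchwartzMap (Fin m → ℝ) ℝ) : conv f g = conv g f := by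
  ext x
  rw [conv_apply, conv_apply, ← integral_sub_left_eq_self _ volume x]
  simp [mul_comm]

theorem conv_apply_swap (f g : SchwartzMap (Fin m → ℝ) ℝ) (x : Fin m → ℝ) :
    conv f g x = ∫ z, f (x - z) * g z := by
  simp_rw [conv_comm f g, conv_apply, mul_comm]

theorem conv_eq_convolution (f g : SchwartzMap (Fin m → ℝ) ℝ) :
    ⇑(conv f g) = MeasureTheory.convolution f g (ContinuousLinearMap.mul ℝ ℝ) volume := by
  ext x
  rw [conv_apply, MeasureTheory.convolution_mul]

theorem conv_assoc (f g k : SchwartzMap (Fin m → ℝ) ℝ) :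
    conv (conv f g) k = conv f (conv g k) := by
  ext x
  rw [conv_eq_convolution, conv_eq_convolution, conv_eq_convolution f, conv_eq_convolution g]
  have hf : Integrable (⇑f) := f.integrable
  have hg : Integrable (⇑g) := g.integrable
  have hk : Integrable (⇑k) := k.integrable
  refine convolution_assoc _ _ _ _ (fun a b c => by simp [mul_assoc]) hf.1 hg.1 hk.1
    (hf.ae_convolution_exists _ hg) (hg.norm.ae_convolution_exists _ hk.norm) ?_
  refine BddAbove.convolutionExistsAt _ (s := Set.univ) ?_ MeasurableSet.univ
    (Set.subset_univ _) hf.norm.integrableOn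
    (hg.norm.integrable_convolution _ hk.norm).aestronglyMeasurable
  refine ⟨∫ t, ‖g t‖ * SchwartzMap.seminorm ℝ 0 0 k, ?_⟩
  rintro _ ⟨t, -, rfl⟩
  refine norm_integral_le_of_norm_le (hg.norm.mul_const _) (ae_of_all _ fun z => ?_)
  simp only [ContinuousLinearMap.mul_apply', norm_mul, norm_norm]
  gcongr
  exact k.norm_le_seminorm ℝ _

end Convolution

section Dilation

variable {m : ℕ}

/-- The anisotropic scaling `x ↦ 2^{ta} x`. -/
def anisoScale (a : Fin m → ℝ) (t : ℝ) : (Fin m → ℝ) ≃L[ℝ] (Fin m → ℝ) :=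
  ContinuousLinearEquiv.piCongrRight fun i =>
    ContinuousLinearEquiv.unitsEquivAut ℝ
      (Units.mk0 ((2 : ℝ) ^ (t * a i)) (Real.rpow_pos_of_pos two_pos _).ne')

theorem anisoScale_apply (a : Fin m → ℝ) (t : ℝ) (x : Fin m → ℝ) :
    anisoScale a t x = fun i => (2 : ℝ) ^ (t * a i) * x i := by
  ext i
  simp [anisoScale, mul_comm]

theorem anisoScale_anisoScale (a : Fin m → ℝ) (s t : ℝ) (x : Fin m → ℝ) :
    anisoScale a s (anisoScale a t x) = anisoScale a (s + t) x := by
  ext i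
  simp [anisoScale_apply, add_mul, Real.rpow_add two_pos, mul_assoc]

theorem anisoScale_zero (a : Fin m → ℝ) (x : Fin m → ℝ) : anisoScale a 0 x = x := by
  ext i
  simp [anisoScale_apply]

theorem integral_comp_anisoScale (a : Fin m → ℝ) (t : ℝ) (F : (Fin m → ℝ) → ℝ) :
    (2 : ℝ) ^ (t * ∑ i, a i) * ∫ x, F (anisoScale a t x) = ∫ x, F x := by
  have hdet : (Matrix.diagonal fun i => (2 : ℝ) ^ (t * a i)).det = (2 : ℝ) ^ (t * ∑ i, a i) := by
    rw [Matrix.det_diagonal, Finset.mul_sum, Real.rpow_sum_of_pos two_pos]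
  have hpos : (0 : ℝ) < 2 ^ (t * ∑ i, a i) := Real.rpow_pos_of_pos two_pos _
  have h := Real.smul_map_diagonal_volume_pi (D := fun i => (2 : ℝ) ^ (t * a i))
    (by rw [hdet]; exact hpos.ne')
  have hfun : ⇑(Matrix.toLin' (Matrix.diagonal fun i => (2 : ℝ) ^ (t * a i)))
      = (anisoScale a t).toHomeomorph.toMeasurableEquiv := by
    ext x i
    simp [anisoScale_apply, Matrix.toLin'_apply, Matrix.mulVec_diagonal]
  rw [hdet, abs_of_pos hpos, hfun] at h
  conv_rhs => rw [← h, integral_smul_measure, ENNReal.toReal_ofReal hpos.le,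
    integral_map_equiv]
  rfl

/-- The `L¹`-normalised anisotropic dilation `x ↦ 2^{t|a|} f(2^{ta} x)`. -/
def dilate (a : Fin m → ℝ) (t : ℝ) : SchwartzMap (Fin m → ℝ) ℝ →ₗ[ℝ] SchwartzMap (Fin m → ℝ) ℝ :=
  (2 : ℝ) ^ (t * ∑ i, a i) • (compCLMOfContinuousLinearEquiv ℝ (anisoScale a t)).toLinearMap

theorem dilate_apply (a : Fin m → ℝ) (t : ℝ) (f : SchwartzMap (Fin m → ℝ) ℝ) (x : Fin m → ℝ) :
    dilate a t f x = (2 : ℝ) ^ (t * ∑ i, a i) * f (anisoScale a t x) := rfl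

theorem dilate_dilate (a : Fin m → ℝ) (s t : ℝ) (f : SchwartzMap (Fin m → ℝ) ℝ) :
    dilate a s (dilate a t f) = dilate a (t + s) f := by
  ext x
  simp only [dilate_apply, anisoScale_anisoScale, add_mul, Real.rpow_add two_pos]
  ring

theorem dilate_zero (a : Fin m → ℝ) (f : SchwartzMap (Fin m → ℝ) ℝ) : dilate a 0 f = f := by
  ext x
  simp [dilate_apply, anisoScale_zero]

/-- Integrating a dilate against a function scales that function. -/
theorem integral_dilate_mul (a : Fin m → ℝ) (t : ℝ) (f : SchwartzMap (Fin m → ℝ) ℝ)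
    (F : (Fin m → ℝ) → ℝ) :
    ∫ x, dilate a t f x * F x = ∫ x, f x * F (anisoScale a (-t) x) := by
  rw [← integral_comp_anisoScale a t (fun x => f x * F (anisoScale a (-t) x)),
    ← integral_const_mul]
  simp [dilate_apply, anisoScale_anisoScale, anisoScale_zero, mul_assoc]

theorem dilate_conv (a : Fin m → ℝ) (t : ℝ) (f g : SchwartzMap (Fin m → ℝ) ℝ) :
    dilate a t (conv f g) = conv (dilate a t f) (dilate a t g) := by
  ext x
  rw [conv_apply, integral_dilate_mul a t f fun z => dilate a t g (x - z), dilate_apply, conv_apply,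
    ← integral_const_mul]
  simp only [dilate_apply, map_sub, anisoScale_anisoScale, add_neg_cancel, anisoScale_zero]
  exact integral_congr_ae (ae_of_all _ fun z => by ring)

end Dilation

section Moments

variable {m : ℕ}

/-- `f` has the moments of a Dirac mass at the origin. -/
def HasDiracMoments (f : SchwartzMap (Fin m → ℝ) ℝ) : Prop :=
  ∀ α : Fin m → ℕ, ∫ x, (∏ i, x i ^ α i) * f x = if α = 0 then 1 else 0

theorem integrable_monomial_mul (f : SchwartzMap (Fin m → ℝ) ℝ) (α : Fin m → ℕ) :
    Integrable (fun x => (∏ i, x i ^ α i) * f x) := by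
  have hf := f.continuous
  refine (f.integrable_pow_mul volume (∑ i, α i)).mono' (by fun_prop) (ae_of_all _ fun x => ?_)
  rw [norm_mul, norm_prod, ← Finset.prod_pow_eq_pow_sum]
  gcongr with i
  rw [norm_pow]
  gcongr
  exact norm_le_pi_norm x i

theorem HasDiracMoments.integral_eq_one {f : SchwartzMap (Fin m → ℝ) ℝ} (hf : HasDiracMoments f) :
    ∫ x, f x = 1 := by
  simpa using hf 0

theorem HasDiracMoments.dilate {f : SchwartzMap (Fin m → ℝ) ℝ} (hf : HasDiracMoments f)
    (a : Fin m → ℝ) (t : ℝ) : HasDiracMoments (dilate a t f) := by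
  intro α
  simp_rw [mul_comm _ (SchwartzMap.dilate a t f _)]
  rw [integral_dilate_mul a t f fun x => ∏ i, x i ^ α i]
  simp only [anisoScale_apply, mul_pow, Finset.prod_mul_distrib, mul_left_comm (f _)]
  rw [integral_const_mul]
  simp_rw [mul_comm (f _)]
  rw [hf α]
  split_ifs with h <;> simp [h]

theorem monomial_add (α : Fin m → ℕ) (x z : Fin m → ℝ) :
    ∏ i, (x i + z i) ^ α i = ∑ p ∈ Fintype.piFinset fun i => Finset.range (α i + 1),
      (∏ i, x i ^ p i) * ((∏ i, z i ^ (α i - p i)) * ∏ i, ((α i).choose (p i) : ℝ)) := by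
  simp_rw [add_pow, Finset.prod_univ_sum, ← Finset.prod_mul_distrib, mul_assoc]

theorem HasDiracMoments.integral_monomial_add {f : SchwartzMap (Fin m → ℝ) ℝ}
    (hf : HasDiracMoments f) (α : Fin m → ℕ) (z : Fin m → ℝ) :
    ∫ x, (∏ i, (x i + z i) ^ α i) * f x = ∏ i, z i ^ α i := by
  simp_rw [monomial_add, Finset.sum_mul, mul_right_comm _ _ (f _)]
  rw [integral_finsetSum _ fun p _ => (f.integrable_monomial_mul p).mul_const _]
  simp_rw [integral_mul_const, hf _, ite_mul, one_mul, zero_mul]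
  rw [Finset.sum_ite_eq' _ (0 : Fin m → ℕ)]
  simp

theorem integrable_monomial_add_mul (f g : SchwartzMap (Fin m → ℝ) ℝ) (α : Fin m → ℕ) :
    Integrable (fun p : (Fin m → ℝ) × (Fin m → ℝ) =>
      (∏ i, (p.1 i + p.2 i) ^ α i) * (f p.1 * g p.2)) (volume.prod volume) := by
  simp_rw [monomial_add, Finset.sum_mul]
  refine integrable_finsetSum _ fun q _ => ?_
  refine (((f.integrable_monomial_mul q).mul_prod
    (g.integrable_monomial_mul fun i => α i - q i)).mul_const
      (∏ i, ((α i).choose (q i) : ℝ))).congr (ae_of_all _ fun p => ?_)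
  simp only
  ring

theorem HasDiracMoments.conv {f g : SchwartzMap (Fin m → ℝ) ℝ}
    (hf : HasDiracMoments f) (hg : HasDiracMoments g) : HasDiracMoments (conv f g) := by
  intro α
  rw [← hg α]
  have hinteg : Integrable (fun p : (Fin m → ℝ) × (Fin m → ℝ) =>
      (∏ i, p.1 i ^ α i) * (f (p.1 - p.2) * g p.2)) (volume.prod volume) := by
    have h := (measurePreserving_sub_prod (volume : Measure (Fin m → ℝ)) volume
      ).integrable_comp_of_integrable
      (integrable_monomial_add_mul f g α)
    refine h.congr (ae_of_all _ fun p => ?_)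
    simp
  calc ∫ x, (∏ i, x i ^ α i) * SchwartzMap.conv f g x
      = ∫ x, ∫ z, (∏ i, x i ^ α i) * (f (x - z) * g z) := by
        simp_rw [conv_apply_swap, integral_const_mul]
    _ = ∫ z, ∫ x, (∏ i, x i ^ α i) * (f (x - z) * g z) := integral_integral_swap hinteg
    _ = ∫ z, (∏ i, z i ^ α i) * g z := by
        refine integral_congr_ae (ae_of_all _ fun z => ?_)
        simp only
        rw [← hf.integral_monomial_add α z, ← integral_mul_const,
          ← integral_add_right_eq_self _ z]
        simp [mul_assoc]

end Moments

end SchwartzMap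

section LogGaussian

open Polynomial

/-- The function `x ↦ P(log x) exp(c log x - log² x)` on the positive half-line, extended by
zero. -/
def logGaussian (c : ℂ) (P : ℂ[X]) (x : ℝ) : ℂ :=
  if 0 < x then P.eval (Real.log x : ℂ) * Complex.exp (c * Real.log x - (Real.log x : ℂ) ^ 2) else 0

theorem logGaussian_of_pos {c : ℂ} {P : ℂ[X]} {x : ℝ} (hx : 0 < x) :
    logGaussian c P x
      = P.eval (Real.log x : ℂ) * Complex.exp (c * Real.log x - (Real.log x : ℂ) ^ 2) := if_pos hx

theorem logGaussian_of_nonpos {c : ℂ} {P : ℂ[X]} {x : ℝ} (hx : x ≤ 0) :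
    logGaussian c P x = 0 := if_neg hx.not_gt

theorem mul_logGaussian (c : ℂ) (P : ℂ[X]) (x : ℝ) :
    (x : ℂ) * logGaussian c P x = logGaussian (c + 1) P x := by
  rcases le_or_gt x 0 with hx | hx
  · simp [logGaussian_of_nonpos hx]
  · rw [logGaussian_of_pos hx, logGaussian_of_pos hx]
    have : (x : ℂ) = Complex.exp (Real.log x : ℂ) := by
      rw [← Complex.ofReal_exp, Real.exp_log hx]
    conv_lhs => rw [this]
    rw [mul_left_comm, ← Complex.exp_add]
    ring_nf

theorem pow_mul_logGaussian (c : ℂ) (P : ℂ[X]) (x : ℝ) (k : ℕ) :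
    (x : ℂ) ^ k * logGaussian c P x = logGaussian (c + k) P x := by
  induction k with
  | zero => simp
  | succ k ih => rw [pow_succ', mul_assoc, ih, mul_logGaussian]; push_cast; ring_nf

theorem exists_norm_logGaussian_le (c : ℂ) (P : ℂ[X]) : ∃ C, ∀ x, ‖logGaussian c P x‖ ≤ C := by
  have hmono : ∀ n : ℕ, ∃ C, 0 ≤ C ∧ ∀ s : ℝ, |s| ^ n * Real.exp (c.re * s - s ^ 2) ≤ C := by
    intro n
    refine ⟨n.factorial * Real.exp ((|c.re| + 1) ^ 2), by positivity, fun s => ?_⟩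
    have h1 : |s| ^ n ≤ n.factorial * Real.exp |s| := by
      have := Real.pow_div_factorial_le_exp |s| (abs_nonneg s) n
      rwa [div_le_iff₀' (by positivity)] at this
    calc |s| ^ n * Real.exp (c.re * s - s ^ 2)
        ≤ n.factorial * Real.exp |s| * Real.exp (c.re * s - s ^ 2) := by gcongr
      _ = n.factorial * Real.exp (|s| + (c.re * s - s ^ 2)) := by rw [Real.exp_add, mul_assoc]
      _ ≤ _ := by
        gcongr
        have h2 : c.re * s ≤ |c.re| * |s| := by rw [← abs_mul]; exact le_abs_self _
        nlinarith [sq_abs s, sq_nonneg (|s| - (|c.re| + 1)), abs_nonneg s, abs_nonneg c.re]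
  choose C hC0 hC using hmono
  refine ⟨∑ n ∈ P.support, ‖P.coeff n‖ * C n, fun x => ?_⟩
  rcases le_or_gt x 0 with hx | hx
  · rw [logGaussian_of_nonpos hx, norm_zero]
    exact Finset.sum_nonneg fun n _ => mul_nonneg (norm_nonneg _) (hC0 n)
  · rw [logGaussian_of_pos hx, eval_eq_sum, Polynomial.sum, Finset.sum_mul]
    refine (norm_sum_le _ _).trans (Finset.sum_le_sum fun n _ => ?_)
    have hre : (c * Real.log x - (Real.log x : ℂ) ^ 2).re = c.re * Real.log x - Real.log x ^ 2 := by
      simp [sq]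
    rw [norm_mul, norm_mul, norm_pow, Complex.norm_exp, hre, Complex.norm_real, mul_assoc,
      Real.norm_eq_abs]
    gcongr
    exact hC n _

theorem hasDerivAt_logGaussian (c : ℂ) (P : ℂ[X]) (x : ℝ) :
    HasDerivAt (logGaussian c P)
      (logGaussian (c - 1) (derivative P + (Polynomial.C c - 2 * X) * P) x) x := by
  rcases lt_trichotomy x 0 with hx | rfl | hx
  · rw [logGaussian_of_nonpos hx.le]
    refine (hasDerivAt_const x (0 : ℂ)).congr_of_eventuallyEq ?_
    filter_upwards [gt_mem_nhds hx] with y hy using logGaussian_of_nonpos hy.le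
  · rw [logGaussian_of_nonpos le_rfl]
    obtain ⟨C, hC⟩ := exists_norm_logGaussian_le (c - 2) P
    rw [hasDerivAt_iff_isLittleO_nhds_zero]
    have hO : (fun h => logGaussian c P h) =O[𝓝 0] fun h : ℝ => h ^ 2 := by
      refine Asymptotics.IsBigO.of_bound C (Eventually.of_forall fun h => ?_)
      have := pow_mul_logGaussian (c - 2) P h 2
      rw [show c - 2 + ((2 : ℕ) : ℂ) = c by push_cast; ring] at this
      rw [← this, norm_mul, mul_comm, norm_pow, norm_pow, Complex.norm_real]
      gcongr
      exact hC h
    simpa [logGaussian_of_nonpos (c := c) (P := P) le_rfl] using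
      hO.trans_isLittleO (Asymptotics.isLittleO_pow_id one_lt_two)
  · have hlog : HasDerivAt (fun y : ℝ => (Real.log y : ℂ)) ((x : ℂ)⁻¹) x := by
      simpa using (Real.hasDerivAt_log hx.ne').ofReal_comp
    have hP := (P.hasDerivAt (Real.log x : ℂ)).comp x hlog
    have hE := ((hlog.const_mul c).sub (hlog.pow 2)).cexp
    have := hP.mul hE
    have hev : logGaussian c P =ᶠ[𝓝 x] fun y =>
        P.eval (Real.log y : ℂ) * Complex.exp (c * Real.log y - (Real.log y : ℂ) ^ 2) := by
      filter_upwards [lt_mem_nhds hx] with y hy using logGaussian_of_pos hy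
    refine HasDerivAt.congr_of_eventuallyEq (this.congr_deriv ?_) hev
    have hx' : (x : ℂ) ≠ 0 := by exact_mod_cast hx.ne'
    rw [eq_comm, ← mul_right_inj' hx', mul_logGaussian, sub_add_cancel, logGaussian_of_pos hx]
    simp
    field_simp

theorem exists_iteratedDeriv_logGaussian_eq (c : ℂ) (P : ℂ[X]) (n : ℕ) :
    ∃ Q : ℂ[X], iteratedDeriv n (logGaussian c P) = logGaussian (c - n) Q := by
  induction n with
  | zero => exact ⟨P, by simp⟩
  | succ n ih =>
    obtain ⟨Q, hQ⟩ := ih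
    refine ⟨derivative Q + (Polynomial.C (c - n) - 2 * X) * Q, ?_⟩
    rw [iteratedDeriv_succ, hQ]
    ext x
    rw [(hasDerivAt_logGaussian _ _ x).deriv]
    push_cast
    ring_nf

/-- `logGaussian` as a Schwartz function. -/
def logGaussianSchwartz (c : ℂ) (P : ℂ[X]) : SchwartzMap ℝ ℂ where
  toFun := logGaussian c P
  smooth' := by
    refine contDiff_of_differentiable_iteratedDeriv fun n _ => ?_
    obtain ⟨Q, hQ⟩ := exists_iteratedDeriv_logGaussian_eq c P n
    rw [hQ]
    exact fun x => (hasDerivAt_logGaussian _ _ x).differentiableAt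
  decay' k n := by
    obtain ⟨Q, hQ⟩ := exists_iteratedDeriv_logGaussian_eq c P n
    obtain ⟨C, hC⟩ := exists_norm_logGaussian_le (c - n + k) Q
    refine ⟨C, fun x => ?_⟩
    rw [norm_iteratedFDeriv_eq_norm_iteratedDeriv, hQ, ← Complex.norm_real, ← norm_pow, ← norm_mul,
      pow_mul_logGaussian]
    exact hC x

end LogGaussian

/-- A nonzero Schwartz function on the half-line all of whose moments vanish. -/
theorem exists_schwartz_halfLine_moments_eq_zero :
    ∃ h : SchwartzMap ℝ ℝ, (∀ x ≤ 0, h x = 0) ∧ (∀ k : ℕ, ∫ x, x ^ k * h x = 0) ∧ ∃ x, h x ≠ 0 := by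
  let h : SchwartzMap ℝ ℝ :=
    SchwartzMap.postcompCLM Complex.imCLM (logGaussianSchwartz (2 * Real.pi * Complex.I) 1)
  have h0 : ∀ x ≤ 0, h x = 0 := fun x hx => by
    change (logGaussian _ _ x).im = 0
    rw [logGaussian_of_nonpos hx, Complex.zero_im]
  have hexp : ∀ s, h (Real.exp s) = Real.exp (-s ^ 2) * Real.sin (2 * Real.pi * s) := fun s => by
    change (logGaussian _ _ (Real.exp s)).im = _
    rw [logGaussian_of_pos (Real.exp_pos s), Real.log_exp, Polynomial.eval_one, one_mul,
      Complex.exp_im]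
    simp [sq]
  refine ⟨h, h0, fun k => ?_, Real.exp (1 / 4), ?_⟩
  · have h1 : ∫ x, x ^ k * h x = ∫ x in Set.Ioi 0, x ^ k * h x :=
      (setIntegral_eq_integral_of_forall_compl_eq_zero fun x hx => by
        rw [h0 x (not_lt.1 hx), mul_zero]).symm
    have h2 := integral_image_eq_integral_abs_deriv_smul MeasurableSet.univ
      (fun s _ => (Real.hasDerivAt_exp s).hasDerivWithinAt) Real.exp_injective.injOn
      (fun x => x ^ k * h x)
    rw [Set.image_univ, Real.range_exp, setIntegral_univ] at h2
    rw [h1, h2]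
    have h3 : ∀ s : ℝ, |Real.exp s| • (Real.exp s ^ k * h (Real.exp s))
        = Real.exp (s * ((k + 1 : ℕ) - s)) * Real.sin (2 * Real.pi * s) := fun s => by
      rw [hexp, abs_of_pos (Real.exp_pos s), smul_eq_mul, ← Real.exp_nat_mul, ← mul_assoc,
        ← mul_assoc, ← Real.exp_add, ← Real.exp_add]
      push_cast
      ring_nf
    simp_rw [h3]
    have h4 := integral_sub_left_eq_self
      (fun s : ℝ => Real.exp (s * ((k + 1 : ℕ) - s)) * Real.sin (2 * Real.pi * s)) volume
      ((k + 1 : ℕ) : ℝ)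
    have h5 : ∀ s : ℝ, Real.exp ((((k + 1 : ℕ) : ℝ) - s) * ((k + 1 : ℕ) - (((k + 1 : ℕ) : ℝ) - s)))
        * Real.sin (2 * Real.pi * (((k + 1 : ℕ) : ℝ) - s))
        = -(Real.exp (s * ((k + 1 : ℕ) - s)) * Real.sin (2 * Real.pi * s)) := fun s => by
      rw [show 2 * Real.pi * (((k + 1 : ℕ) : ℝ) - s)
        = (k + 1 : ℕ) * (2 * Real.pi) - 2 * Real.pi * s by ring, Real.sin_nat_mul_two_pi_sub]
      ring_nf
    simp_rw [h5, integral_neg] at h4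
    linarith
  · rw [hexp, show 2 * Real.pi * (1 / 4) = Real.pi / 2 by ring, Real.sin_pi_div_two, mul_one]
    exact (Real.exp_pos _).ne'

section HalfLine

/-- A Schwartz function supported in `[1, ∞)` is divisible by the coordinate in that class. -/
theorem exists_schwartz_mul_eq (q : SchwartzMap ℝ ℝ) (hq : ∀ x < 1, q x = 0) :
    ∃ p : SchwartzMap ℝ ℝ, (∀ x, x * p x = q x) ∧ ∀ x < 1, p x = 0 := by
  set p : ℝ → ℝ := fun x => q x / x with hp
  have hzero : ∀ x < 1, p x = 0 := fun x hx => by simp [hp, hq x hx]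
  have hmul : ∀ x, x * p x = q x := fun x => by
    rcases eq_or_ne x 0 with rfl | hx
    · simp [hq 0 one_pos]
    · simp only [hp]; field_simp
  have hev : ∀ x < 1, p =ᶠ[𝓝 x] fun _ => 0 := fun x hx => by
    filter_upwards [gt_mem_nhds hx] with y hy using hzero y hy
  have hsm : ContDiff ℝ (⊤ : ℕ∞) p := contDiff_iff_contDiffAt.2 fun x => by
    rcases lt_or_ge x 1 with hx | hx
    · exact contDiffAt_const.congr_of_eventuallyEq (hev x hx)
    · exact (q.smooth ⊤).contDiffAt.div contDiffAt_id (by positivity)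
  have hdiff : ∀ n x, HasDerivAt (iteratedDeriv n p) (iteratedDeriv (n + 1) p x) x := fun n x => by
    rw [iteratedDeriv_succ]
    exact (hsm.differentiable_iteratedDeriv n
      (by exact_mod_cast WithTop.coe_lt_top n) x).hasDerivAt
  have hleib : ∀ n x, iteratedDeriv (n + 1) q x
      = x * iteratedDeriv (n + 1) p x + (n + 1) * iteratedDeriv n p x := by
    intro n
    induction n with
    | zero =>
      intro x
      rw [iteratedDeriv_succ, iteratedDeriv_zero]
      have h := (hasDerivAt_id' x).mul (hdiff 0 x)
      have hfun : ((fun y : ℝ => y) * iteratedDeriv 0 p) = q := by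
        ext y; simp [iteratedDeriv_zero, hmul]
      rw [hfun] at h
      rw [h.deriv]
      simp; ring
    | succ n ih =>
      intro x
      rw [iteratedDeriv_succ, funext ih]
      have h := ((hasDerivAt_id' x).mul (hdiff (n + 1) x)).add
        ((hdiff n x).const_mul ((n : ℝ) + 1))
      refine h.deriv.trans ?_
      push_cast; ring
  have hdecay : ∀ n k : ℕ, ∃ C, ∀ x, ‖x‖ ^ k * ‖iteratedDeriv n p x‖ ≤ C := by
    have hvan : ∀ n : ℕ, ∀ x < 1, iteratedDeriv n p x = 0 := fun n x hx => by
      rw [(hev x hx).iteratedDeriv_eq n]; simp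
    have hred : ∀ n : ℕ, ∀ x ≥ 1, ‖iteratedDeriv n p x‖ ≤ ‖x * iteratedDeriv n p x‖ :=
      fun n x hx => by
        rw [norm_mul]
        exact le_mul_of_one_le_left (norm_nonneg _) (hx.trans (le_abs_self x))
    intro n k
    induction n with
    | zero =>
      obtain ⟨C, hC⟩ := q.decay' k 0
      have hC0 : 0 ≤ C := le_trans (by positivity) (hC 0)
      refine ⟨C, fun x => ?_⟩
      rcases lt_or_ge x 1 with hx | hx
      · simpa [hvan 0 x hx] using hC0
      · refine le_trans ?_ (hC x)
        gcongr
        refine (hred 0 x hx).trans_eq ?_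
        rw [norm_iteratedFDeriv_zero, iteratedDeriv_zero, hmul]
        rfl
    | succ n ih =>
      obtain ⟨C, hC⟩ := q.decay' k (n + 1)
      have hC0 : 0 ≤ C := le_trans (by positivity) (hC 0)
      obtain ⟨D, hD⟩ := ih
      have hD0 : 0 ≤ D := le_trans (by positivity) (hD 0)
      refine ⟨C + (n + 1) * D, fun x => ?_⟩
      rcases lt_or_ge x 1 with hx | hx
      · rw [hvan _ x hx, norm_zero, mul_zero]; positivity
      · have h1 : ‖x * iteratedDeriv (n + 1) p x‖
            ≤ ‖iteratedDeriv (n + 1) q x‖ + (n + 1) * ‖iteratedDeriv n p x‖ := by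
          rw [eq_sub_of_add_eq (hleib n x).symm]
          refine (norm_sub_le _ _).trans_eq ?_
          rw [norm_mul, Real.norm_of_nonneg (by positivity : (0 : ℝ) ≤ n + 1)]
        have h2 := hC x
        rw [norm_iteratedFDeriv_eq_norm_iteratedDeriv] at h2
        calc ‖x‖ ^ k * ‖iteratedDeriv (n + 1) p x‖
            ≤ ‖x‖ ^ k * (‖iteratedDeriv (n + 1) q x‖ + (n + 1) * ‖iteratedDeriv n p x‖) := by
              gcongr
              exact (hred _ x hx).trans h1
          _ = ‖x‖ ^ k * ‖iteratedDeriv (n + 1) q x‖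
              + (n + 1) * (‖x‖ ^ k * ‖iteratedDeriv n p x‖) := by ring
          _ ≤ C + (n + 1) * D := by
              gcongr
              · exact h2
              · exact hD x
  exact ⟨⟨p, hsm, fun k n => by
    simpa only [norm_iteratedFDeriv_eq_norm_iteratedDeriv] using hdecay n k⟩, hmul, hzero⟩

theorem exists_schwartz_pow_mul_eq (q : SchwartzMap ℝ ℝ) (hq : ∀ x < 1, q x = 0) (k : ℕ) :
    ∃ p : SchwartzMap ℝ ℝ, (∀ x, x ^ k * p x = q x) ∧ ∀ x < 1, p x = 0 := by
  induction k with
  | zero => exact ⟨q, by simp, hq⟩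
  | succ k ih =>
    obtain ⟨p, hp, hp0⟩ := ih
    obtain ⟨r, hr, hr0⟩ := exists_schwartz_mul_eq p hp0
    exact ⟨r, fun x => by rw [pow_succ, mul_assoc, hr, hp], hr0⟩

theorem integrable_pow_mul_schwartz (q : SchwartzMap ℝ ℝ) (k : ℕ) :
    Integrable fun x => x ^ k * q x := by
  have := q.continuous
  refine (q.integrable_pow_mul volume k).mono' (by fun_prop) (ae_of_all _ fun x => ?_)
  rw [norm_mul, norm_pow]

/-- A nonzero Schwartz function supported in `[1, ∞)` has a nonzero moment of nonpositive order. -/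
theorem exists_integral_ne_zero_of_pow_mul_eq (q : SchwartzMap ℝ ℝ) (hq : ∀ x < 1, q x = 0)
    (hne : ∃ x, q x ≠ 0) (p : ℕ → SchwartzMap ℝ ℝ) (hp : ∀ k x, x ^ k * p k x = q x)
    (hp0 : ∀ k, ∀ x < 1, p k x = 0) : ∃ k, ∫ x, p k x ≠ 0 := by
  by_contra! hall
  have hcont : Continuous fun y : ℝ => q y⁻¹ := by
    refine continuous_iff_continuousAt.2 fun y => ?_
    rcases eq_or_ne y 0 with rfl | hy
    · have hlim : Tendsto (fun y : ℝ => q y⁻¹) (𝓝[≠] 0) (𝓝 0) := by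
        refine (zero_at_infty q).comp ?_
        rw [← Metric.cobounded_eq_cocompact]
        exact tendsto_inv₀_nhdsNE_zero
      rw [continuousAt_iff_punctured_nhds]
      simpa [hq 0 one_pos] using hlim
    · exact q.continuous.continuousAt.comp (continuousAt_inv₀ hy)
  have hpoly : ∀ P : Polynomial ℝ, ∫ x, q x * P.eval x⁻¹ = 0 := by
    intro P
    have hpt : ∀ x, q x * P.eval x⁻¹ = ∑ i ∈ P.support, P.coeff i * p i x := by
      intro x
      rcases lt_or_ge x 1 with hx | hx
      · simp [hq x hx, hp0 _ x hx]
      · have hx0 : x ≠ 0 := by positivity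
        rw [Polynomial.eval_eq_sum, Polynomial.sum, Finset.mul_sum]
        refine Finset.sum_congr rfl fun i _ => ?_
        rw [← hp i x, inv_pow]
        field_simp
    simp_rw [hpt]
    rw [integral_finsetSum _ fun i _ => (p i).integrable.const_mul _]
    simp [integral_const_mul, hall]
  have hsq : ∫ x, q x * q x = 0 := by
    refine abs_eq_zero.1 (le_antisymm (le_of_forall_pos_le_add fun ε hε => ?_) (abs_nonneg _))
    set M := ∫ x, ‖q x‖ with hM
    have hM0 : 0 ≤ M := integral_nonneg fun _ => norm_nonneg _
    obtain ⟨P, hP⟩ := exists_polynomial_near_of_continuousOn 0 1 _ hcont.continuousOn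
      (ε / (M + 1)) (by positivity)
    have hb : ∀ x, ‖q x * q x - q x * P.eval x⁻¹‖ ≤ ‖q x‖ * (ε / (M + 1)) := by
      intro x
      rcases lt_or_ge x 1 with hx | hx
      · simp [hq x hx]
      · rw [← mul_sub, norm_mul]
        gcongr
        have := hP x⁻¹ ⟨by positivity, inv_le_one_of_one_le₀ hx⟩
        rw [inv_inv, abs_sub_comm] at this
        exact this.le
    have hi1 : Integrable fun x => q x * q x :=
      q.integrable.mul_bdd q.continuous.aestronglyMeasurable
        (ae_of_all _ fun z => q.norm_le_seminorm ℝ z)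
    have hmeas : AEStronglyMeasurable (fun x => q x * q x - q x * P.eval x⁻¹) volume := by
      have h1 := q.continuous.measurable
      have h2 := P.continuous.measurable.comp (measurable_inv (G := ℝ))
      exact ((h1.mul h1).sub (h1.mul h2)).aestronglyMeasurable
    have hi3 : Integrable fun x => q x * q x - q x * P.eval x⁻¹ :=
      (q.integrable.norm.mul_const _).mono' hmeas (ae_of_all _ hb)
    have hi2 : Integrable fun x => q x * P.eval x⁻¹ := 
      (hi1.sub hi3).congr (ae_of_all _ fun x => by simp)
    have heq : ∫ x, q x * q x = ∫ x, (q x * q x - q x * P.eval x⁻¹) := by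
      rw [integral_sub hi1 hi2, hpoly, sub_zero]
    rw [heq, zero_add, ← Real.norm_eq_abs]
    refine (norm_integral_le_of_norm_le (q.integrable.norm.mul_const _) (ae_of_all _ hb)).trans ?_
    rw [integral_mul_const, ← hM, mul_div_assoc', div_le_iff₀ (by positivity)]
    nlinarith
  obtain ⟨x₀, hx₀⟩ := hne
  have hpos : 0 < ∫ x, q x * q x := by
    refine integral_pos_of_integrable_nonneg_nonzero (x := x₀) (q.continuous.mul q.continuous) ?_
      (fun x => mul_self_nonneg _) (mul_self_ne_zero.2 hx₀)
    exact q.integrable.mul_bdd q.continuous.aestronglyMeasurable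
      (ae_of_all _ fun z => q.norm_le_seminorm ℝ z)
  exact hpos.ne' hsq

/-- There is a Schwartz function supported in `(-∞, -1]` with the moments of a Dirac mass at `0`. -/
theorem exists_schwartz_halfLine_dirac_moments :
    ∃ g : SchwartzMap ℝ ℝ, (∀ x, -1 < x → g x = 0) ∧
      ∀ k : ℕ, ∫ x, x ^ k * g x = if k = 0 then 1 else 0 := by
  obtain ⟨h, hh0, hhm, x₀, hx₀⟩ := exists_schwartz_halfLine_moments_eq_zero
  let q : SchwartzMap ℝ ℝ := SchwartzMap.compSubConstCLM ℝ 1 h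
  have hq : ∀ x, q x = h (x - 1) := fun x => by simp [q]
  have hq0 : ∀ x < 1, q x = 0 := fun x hx => by rw [hq, hh0 _ (by linarith)]
  have hqm : ∀ k : ℕ, ∫ x, x ^ k * q x = 0 := fun k => by
    rw [← integral_add_right_eq_self _ (1 : ℝ)]
    simp_rw [hq, add_sub_cancel_right, add_pow, one_pow, mul_one, Finset.sum_mul,
      mul_right_comm _ _ (h _)]
    rw [integral_finsetSum _ fun i _ => (integrable_pow_mul_schwartz h i).mul_const _]
    simp [integral_mul_const, hhm]
  choose p hp hp0 using exists_schwartz_pow_mul_eq q hq0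
  have hex := exists_integral_ne_zero_of_pow_mul_eq q hq0 ⟨x₀ + 1, by simpa [hq] using hx₀⟩ p hp hp0
  classical
  set k := Nat.find hex with hk
  have hkne : ∫ x, p k x ≠ 0 := Nat.find_spec hex
  have hmom : ∀ j : ℕ, j ≠ 0 → ∫ x, x ^ j * p k x = 0 := by
    intro j hj
    rcases le_or_gt k j with hkj | hkj
    · rw [← hqm (j - k)]
      congr with x
      rw [← hp k x, ← mul_assoc, ← pow_add, Nat.sub_add_cancel hkj]
    · have hmin := Nat.find_min hex (m := k - j) (by omega)
      rw [not_not] at hmin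
      rw [← hmin]
      congr with x
      rcases lt_or_ge x 1 with hx | hx
      · rw [hp0 _ x hx, hp0 _ x hx, mul_zero]
      · have hx0 : x ^ (k - j) ≠ 0 := by positivity
        rw [← mul_right_inj' hx0, hp, ← hp k x, ← mul_assoc, ← pow_add,
          Nat.sub_add_cancel hkj.le]
  refine ⟨(∫ x, p k x)⁻¹ •
    SchwartzMap.compCLMOfContinuousLinearEquiv ℝ (ContinuousLinearEquiv.neg ℝ) (p k),
    fun x hx => ?_, fun j => ?_⟩
  · simp [hp0 k (-x) (by linarith)]
  · rw [← integral_neg_eq_self]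
    have hpt : ∀ x : ℝ, (-x) ^ j * ((∫ x, p k x)⁻¹ • SchwartzMap.compCLMOfContinuousLinearEquiv ℝ
        (ContinuousLinearEquiv.neg ℝ) (p k)) (-x)
        = (-1) ^ j * (∫ x, p k x)⁻¹ * (x ^ j * p k x) := fun x => by
      rw [neg_pow]
      simp
      ring
    simp_rw [hpt]
    rw [integral_const_mul]
    split_ifs with hj
    · subst hj
      simp [hkne]
    · rw [hmom j hj, mul_zero]

end HalfLine

namespace SchwartzMap

section Tensor

variable {m : ℕ}

/-- The tensor power `x ↦ ∏ i, g (x i)` of a Schwartz function on the line. -/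
def tensorPower (m : ℕ) (g : SchwartzMap ℝ ℝ) : SchwartzMap (Fin m → ℝ) ℝ where
  toFun x := ∏ i, g (x i)
  smooth' := contDiff_prod fun i _ => (g.smooth ⊤).comp (contDiff_apply ℝ ℝ i)
  decay' k n := by
    choose C hC0 hC using fun l => g.exists_one_add_pow_mul_le k l
    refine ⟨∑ p ∈ (Finset.univ : Finset (Fin m)).sym n, ((p : Multiset (Fin m)).countPerms : ℝ) *
      ∏ j, C (Multiset.count j (p : Multiset (Fin m))), fun x => ?_⟩
    have hcoord : ∀ (l : ℕ) (j : Fin m),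
        ‖iteratedFDeriv ℝ l (fun y : Fin m → ℝ => g (y j)) x‖ ≤ ‖iteratedFDeriv ℝ l g (x j)‖ := by
      intro l j
      have h := (ContinuousLinearMap.proj (R := ℝ) (φ := fun _ : Fin m => ℝ) j
        ).iteratedFDeriv_comp_right (g.smooth l) x le_rfl
      have hn : ‖ContinuousLinearMap.proj (R := ℝ) (φ := fun _ : Fin m => ℝ) j‖ ≤ 1 :=
        ContinuousLinearMap.opNorm_le_bound _ zero_le_one fun y => by
          simpa using norm_le_pi_norm y j
      refine (congrArg norm h).trans_le
        ((ContinuousMultilinearMap.norm_compContinuousLinearMap_le _ _).trans ?_)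
      refine mul_le_of_le_one_right (norm_nonneg _) ?_
      exact Finset.prod_le_one (fun _ _ => norm_nonneg _) fun _ _ => hn
    have hnorm : ‖x‖ ≤ ∏ j, (1 + ‖x j‖) := by
      refine (pi_norm_le_iff_of_nonneg (by positivity)).2 fun i => ?_
      rw [← Finset.mul_prod_erase _ _ (Finset.mem_univ i)]
      refine (le_add_of_nonneg_left zero_le_one).trans (le_mul_of_one_le_right (by positivity) ?_)
      exact Finset.prod_induction _ (1 ≤ ·) (fun _ _ => one_le_mul_of_one_le_of_one_le) le_rfl
        fun j _ => le_add_of_nonneg_right (norm_nonneg (x j))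
    have hpow : ‖x‖ ^ k ≤ ∏ j, (1 + ‖x j‖) ^ k := by
      rw [Finset.prod_pow]
      gcongr
    have hsm : ∀ j ∈ (Finset.univ : Finset (Fin m)),
        ContDiff ℝ n fun y : Fin m → ℝ => g (y j) :=
      fun j _ => (g.smooth n).comp (contDiff_apply ℝ ℝ j)
    refine (mul_le_mul hpow (norm_iteratedFDeriv_prod_le hsm le_rfl) (norm_nonneg _)
      (by positivity)).trans ?_
    rw [Finset.mul_sum]
    refine Finset.sum_le_sum fun p _ => ?_
    rw [mul_left_comm, ← Finset.prod_mul_distrib]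
    gcongr with j
    exact (mul_le_mul_of_nonneg_left (hcoord _ j) (by positivity)).trans (hC _ _)

theorem tensorPower_apply (g : SchwartzMap ℝ ℝ) (x : Fin m → ℝ) :
    tensorPower m g x = ∏ i, g (x i) := rfl

theorem hasDiracMoments_tensorPower {g : SchwartzMap ℝ ℝ}
    (hg : ∀ k : ℕ, ∫ x, x ^ k * g x = if k = 0 then 1 else 0) :
    HasDiracMoments (tensorPower m g) := by
  intro α
  simp_rw [tensorPower_apply, ← Finset.prod_mul_distrib]
  rw [integral_fintype_prod_volume_eq_prod (fun i y => y ^ α i * g y)]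
  simp_rw [hg, Finset.prod_ite_zero, Finset.prod_const_one, funext_iff]
  simp

end Tensor
end SchwartzMap

namespace SchwartzMap

section Calderon

/-- The moment of order `α`, as a linear functional on Schwartz functions. -/
def moment {m : ℕ} (α : Fin m → ℕ) : SchwartzMap (Fin m → ℝ) ℝ →ₗ[ℝ] ℝ where
  toFun f := ∫ x, (∏ i, x i ^ α i) * f x
  map_add' f g := by
    rw [← integral_add (f.integrable_monomial_mul α) (g.integrable_monomial_mul α)]
    simp [mul_add]
  map_smul' r f := by
    rw [RingHom.id_apply, smul_eq_mul, ← integral_const_mul]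
    simp [mul_left_comm]

theorem HasDiracMoments.moment_eq {m : ℕ} {f : SchwartzMap (Fin m → ℝ) ℝ}
    (hf : HasDiracMoments f) (α : Fin m → ℕ) : moment α f = if α = 0 then 1 else 0 := hf α

variable {n : ℕ}

/-- The Schwartz functions supported in the half-space `{xₙ ≤ -1}`. -/
def halfSpaceSubmodule (n : ℕ) : Submodule ℝ (SchwartzMap (Fin (n + 1) → ℝ) ℝ) where
  carrier := {f | ∀ x, -1 < x (Fin.last n) → f x = 0}
  zero_mem' _ _ := rfl
  add_mem' hf hg x hx := by simp [hf x hx, hg x hx]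
  smul_mem' r _ hf x hx := by simp [hf x hx]

theorem tsupport_subset_of_mem_halfSpaceSubmodule {f : SchwartzMap (Fin (n + 1) → ℝ) ℝ}
    (hf : f ∈ halfSpaceSubmodule n) : tsupport ⇑f ⊆ {x | x (Fin.last n) < 0} := by
  have hclosed : IsClosed {x : Fin (n + 1) → ℝ | x (Fin.last n) ≤ -1} :=
    isClosed_le (continuous_apply _) continuous_const
  refine (closure_minimal (fun x hx => ?_) hclosed).trans fun x hx => ?_
  · exact le_of_not_gt fun h => hx (hf x h)
  · exact lt_of_le_of_lt (Set.mem_ofPred.1 hx) neg_one_lt_zero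

theorem conv_mem_halfSpaceSubmodule {f g : SchwartzMap (Fin (n + 1) → ℝ) ℝ}
    (hf : f ∈ halfSpaceSubmodule n) (hg : g ∈ halfSpaceSubmodule n) :
    conv f g ∈ halfSpaceSubmodule n := by
  intro x hx
  rw [conv_apply]
  refine integral_eq_zero_of_ae (ae_of_all _ fun z => ?_)
  rcases lt_or_ge (-1) (z (Fin.last n)) with hz | hz
  · simp [hf z hz]
  · simp [hg (x - z) (by rw [Pi.sub_apply]; linarith)]

theorem dilate_mem_halfSpaceSubmodule {f : SchwartzMap (Fin (n + 1) → ℝ) ℝ}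
    (hf : f ∈ halfSpaceSubmodule n) {a : Fin (n + 1) → ℝ} (ha : ∀ i, 1 ≤ a i) :
    dilate a (-1) f ∈ halfSpaceSubmodule n := by
  intro x hx
  rw [dilate_apply, hf, mul_zero]
  have hpos : (0 : ℝ) < 2 ^ (-1 * a (Fin.last n)) := Real.rpow_pos_of_pos two_pos _
  have hle : (2 : ℝ) ^ (-1 * a (Fin.last n)) ≤ 1 :=
    Real.rpow_le_one_of_one_le_of_nonpos one_le_two (by linarith [ha (Fin.last n)])
  rw [anisoScale_apply]
  nlinarith

theorem norm_anisoScale_neg_le {m : ℕ} {a : Fin m → ℝ} (ha : ∀ i, 1 ≤ a i) (N : ℕ) :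
    ‖(anisoScale a (-(N : ℝ)) : (Fin m → ℝ) →L[ℝ] (Fin m → ℝ))‖ ≤ (1 / 2 : ℝ) ^ N := by
  refine ContinuousLinearMap.opNorm_le_bound _ (by positivity) fun x => ?_
  refine (pi_norm_le_iff_of_nonneg (by positivity)).2 fun i => ?_
  rw [ContinuousLinearEquiv.coe_coe, anisoScale_apply, norm_mul,
    Real.norm_of_nonneg (Real.rpow_nonneg two_pos.le _)]
  have hle : (2 : ℝ) ^ (-(N : ℝ) * a i) ≤ (1 / 2 : ℝ) ^ N := by
    rw [one_div, inv_pow, ← Real.rpow_natCast, ← Real.rpow_neg two_pos.le]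
    refine Real.rpow_le_rpow_of_exponent_le one_le_two ?_
    nlinarith [ha i, (Nat.cast_nonneg N : (0 : ℝ) ≤ N)]
  exact mul_le_mul hle (norm_le_pi_norm x i) (norm_nonneg _) (by positivity)

/-- Averaging translates against the dilates of a Schwartz function of integral one recovers the
averaged function. -/
theorem tendsto_translateAverage_dilate {m : ℕ} {a : Fin m → ℝ} (ha : ∀ i, 1 ≤ a i)
    (T η : SchwartzMap (Fin m → ℝ) ℝ) (hT : ∫ x, T x = 1) :
    Tendsto (fun N : ℕ => translateAverage volume (ContinuousLinearMap.id ℝ _)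
      ContinuousLinearMap.norm_id_le (dilate a N T) η) atTop (𝓝 η) := by
  have hle := norm_anisoScale_neg_le ha
  have hlim : Tendsto (fun N : ℕ =>
      ‖(anisoScale a (-(N : ℝ)) : (Fin m → ℝ) →L[ℝ] (Fin m → ℝ))‖) atTop (𝓝 0) :=
    squeeze_zero (fun _ => norm_nonneg _) hle
      (tendsto_pow_atTop_nhds_zero_of_lt_one (by norm_num) (by norm_num))
  have hone : ∀ N : ℕ, ‖(anisoScale a (-(N : ℝ)) : (Fin m → ℝ) →L[ℝ] (Fin m → ℝ))‖ ≤ 1 :=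
    fun N => (hle N).trans (pow_le_one₀ (by norm_num) (by norm_num))
  refine (tendsto_translateAverage T η hT _ hone hlim).congr fun N => ?_
  ext x
  rw [translateAverage_apply, translateAverage_apply]
  exact (integral_dilate_mul a N T fun z => η (x + z)).symm

theorem anisoDil_zero {m : ℕ} (a : Fin m → ℝ) (θ₀ θ : SchwartzMap (Fin m → ℝ) ℝ) :
    anisoDil a ⇑θ₀ ⇑θ 0 = ⇑θ₀ := by
  ext x
  simp [anisoDil]

theorem anisoDil_succ {m : ℕ} (a : Fin m → ℝ) (θ₀ θ : SchwartzMap (Fin m → ℝ) ℝ) (j : ℕ) :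
    anisoDil a ⇑θ₀ ⇑θ (j + 1) = ⇑(dilate a (j + 1 : ℕ) θ) := by
  ext x
  rw [anisoDil, if_neg j.succ_ne_zero, dilate_apply, anisoScale_apply]

/-- The sum of the kernels `ψ_j * φ_j` telescopes when `ψ * φ` is the difference of `ψ₀ * φ₀` and
its dilate. -/
theorem sum_conv_dilate {m : ℕ} (a : Fin m → ℝ) {φ ψ T : SchwartzMap (Fin m → ℝ) ℝ}
    (h : conv ψ φ = T - dilate a (-1) T) (N : ℕ) :
    T + ∑ j ∈ Finset.range N, conv (dilate a (j + 1 : ℕ) ψ) (dilate a (j + 1 : ℕ) φ)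
      = dilate a N T := by
  induction N with
  | zero => simp [dilate_zero]
  | succ N ih =>
    rw [Finset.sum_range_succ, ← add_assoc, ih, ← dilate_conv, h, map_sub, dilate_dilate,
      show (-1 : ℝ) + (N + 1 : ℕ) = N by push_cast; ring]
    abel

theorem conv_sub_eq_sub_of_cubic (f s : SchwartzMap (Fin (n + 1) → ℝ) ℝ) :
    conv ((3 : ℝ) • (f + s) - (2 : ℝ) • (conv f f + conv f s + conv s s)) (f - s)
      = conv ((3 : ℝ) • f - (2 : ℝ) • conv f f) f
        - conv ((3 : ℝ) • s - (2 : ℝ) • conv s s) s := by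
  simp only [map_add, map_sub, map_smul, LinearMap.add_apply, LinearMap.sub_apply,
    LinearMap.smul_apply]
  rw [conv_comm s f, conv_assoc f s f, conv_comm s f, ← conv_assoc f f s, conv_assoc s s f,
    conv_comm s f, ← conv_assoc s f s, conv_comm s f]
  module

end Calderon

end SchwartzMap

open SchwartzMap in
/-- For any anisotropy `a ∈ [1,∞)ⁿ` there exist `φ₀, φ, ψ₀, ψ ∈ 𝓢(ℝⁿ)`
supported in the open half-space `{xₙ < 0}`, with `φ` and `ψ` having vanishing moments of all
orders, such that the Calderón reproducing formula `u = Σ_j ψ_j * (φ_j * u)` holds for every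
tempered distribution `u`, the series converging in the weak* sense; here
`⟨ψ_j * (φ_j * u), η⟩ = ⟨u, (ψ_j*φ_j)̌ * η⟩`. -/
theorem exists_calderon_reproducing_halfspace (n : ℕ) (a : Fin (n+1) → ℝ)
    (ha : ∀ i, 1 ≤ a i) :
    ∃ φ₀ φ ψ₀ ψ : SchwartzMap (Fin (n+1) → ℝ) ℝ,
      tsupport ⇑φ₀ ⊆ {x : Fin (n+1) → ℝ | x (Fin.last n) < 0} ∧
      tsupport ⇑φ ⊆ {x : Fin (n+1) → ℝ | x (Fin.last n) < 0} ∧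
      tsupport ⇑ψ₀ ⊆ {x : Fin (n+1) → ℝ | x (Fin.last n) < 0} ∧
      tsupport ⇑ψ ⊆ {x : Fin (n+1) → ℝ | x (Fin.last n) < 0} ∧
      VanishingMoments ⇑φ ∧ VanishingMoments ⇑ψ ∧
      ∀ (u : SchwartzMap (Fin (n+1) → ℝ) ℝ →L[ℝ] ℝ)
        (η : SchwartzMap (Fin (n+1) → ℝ) ℝ)
        (c : ℕ → SchwartzMap (Fin (n+1) → ℝ) ℝ),
        (∀ (j : ℕ) (x : Fin (n+1) → ℝ),
          c j x = ∫ y : Fin (n+1) → ℝ,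
            (∫ z : Fin (n+1) → ℝ,
              anisoDil a ⇑ψ₀ ⇑ψ j ((y - x) - z) * anisoDil a ⇑φ₀ ⇑φ j z) * η y) →
        Tendsto (fun N => ∑ j ∈ Finset.range N, u (c j)) atTop (nhds (u η)) := by
  obtain ⟨g, hg0, hgm⟩ := exists_schwartz_halfLine_dirac_moments
  set Φ : SchwartzMap (Fin (n + 1) → ℝ) ℝ := tensorPower (n + 1) g with hΦ
  set s := dilate a (-1) Φ with hs
  have hΦm : HasDiracMoments Φ := hasDiracMoments_tensorPower hgm
  have hsm : HasDiracMoments s := hΦm.dilate a (-1)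
  have hΦs : Φ ∈ halfSpaceSubmodule n := fun x hx => by
    rw [hΦ, tensorPower_apply]
    exact Finset.prod_eq_zero (Finset.mem_univ (Fin.last n)) (hg0 _ hx)
  have hss : s ∈ halfSpaceSubmodule n := dilate_mem_halfSpaceSubmodule hΦs ha
  set ψ₀ := (3 : ℝ) • Φ - (2 : ℝ) • SchwartzMap.conv Φ Φ with hψ₀
  set ψ := (3 : ℝ) • (Φ + s) - (2 : ℝ) • (SchwartzMap.conv Φ Φ + SchwartzMap.conv Φ s
    + SchwartzMap.conv s s) with hψ
  set T := SchwartzMap.conv ψ₀ Φ with hTdef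
  have hψ₀m : HasDiracMoments ψ₀ := fun α => by
    change moment α ψ₀ = _
    simp only [hψ₀, map_sub, map_smul, hΦm.moment_eq, (hΦm.conv hΦm).moment_eq, smul_eq_mul]
    ring
  have htel : SchwartzMap.conv ψ (Φ - s) = T - dilate a (-1) T := by
    rw [hψ, conv_sub_eq_sub_of_cubic, hTdef, dilate_conv, hψ₀, map_sub (dilate a (-1)),
      map_smul (dilate a (-1)), map_smul (dilate a (-1)), dilate_conv]
  refine ⟨Φ, Φ - s, ψ₀, ψ, tsupport_subset_of_mem_halfSpaceSubmodule hΦs,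
    tsupport_subset_of_mem_halfSpaceSubmodule (sub_mem hΦs hss),
    tsupport_subset_of_mem_halfSpaceSubmodule ?_, tsupport_subset_of_mem_halfSpaceSubmodule ?_,
    fun α => ?_, fun α => ?_, fun u η c hc => ?_⟩
  · exact sub_mem (Submodule.smul_mem _ _ hΦs)
      (Submodule.smul_mem _ _ (conv_mem_halfSpaceSubmodule hΦs hΦs))
  · exact sub_mem (Submodule.smul_mem _ _ (add_mem hΦs hss))
      (Submodule.smul_mem _ _ (add_mem (add_mem (conv_mem_halfSpaceSubmodule hΦs hΦs)
        (conv_mem_halfSpaceSubmodule hΦs hss)) (conv_mem_halfSpaceSubmodule hss hss)))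
  · change moment α (Φ - s) = 0
    rw [map_sub, hΦm.moment_eq, hsm.moment_eq, sub_self]
  · change moment α ψ = 0
    simp only [hψ, map_sub, map_add, map_smul, hΦm.moment_eq, hsm.moment_eq,
      (hΦm.conv hΦm).moment_eq, (hΦm.conv hsm).moment_eq, (hsm.conv hsm).moment_eq, smul_eq_mul]
    ring
  · set A := translateAverage (volume : Measure (Fin (n + 1) → ℝ)) (ContinuousLinearMap.id ℝ _)
      ContinuousLinearMap.norm_id_le with hA
    have hcA : ∀ (j : ℕ) (p q : SchwartzMap (Fin (n + 1) → ℝ) ℝ), anisoDil a ⇑ψ₀ ⇑ψ j = ⇑p →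
        anisoDil a ⇑Φ ⇑(Φ - s) j = ⇑q → c j = A (SchwartzMap.conv p q) η := by
      intro j p q hp hq
      ext x
      rw [hc, hA, translateAverage_apply, hp, hq, ← integral_add_right_eq_self _ x]
      simp [conv_apply_swap, add_comm]
    have hsum : ∀ N : ℕ, ∑ j ∈ Finset.range (N + 1), u (c j) = u (A (dilate a N T) η) := by
      intro N
      rw [← sum_conv_dilate a htel N, Finset.sum_range_succ', map_add A, map_sum A,
        LinearMap.add_apply, LinearMap.sum_apply, map_add u, map_sum u, add_comm,
        hcA 0 _ _ (anisoDil_zero a ψ₀ ψ) (anisoDil_zero a Φ (Φ - s))]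
      congr 1
      exact Finset.sum_congr rfl fun j _ => congrArg u
        (hcA (j + 1) _ _ (anisoDil_succ a ψ₀ ψ j) (anisoDil_succ a Φ (Φ - s) j))
    refine (tendsto_add_atTop_iff_nat 1).1 ?_
    simp_rw [hsum]
    exact (u.continuous.tendsto η).comp
      (tendsto_translateAverage_dilate ha T η (hψ₀m.conv hΦm).integral_eq_one)

end
end

section
/- Let a = (a₁,…,aₙ) ∈ [1,∞)ⁿ and let φ₀, φ, ψ₀, ψ ∈ 𝓢(ℝⁿ) be supported in {x ∈ ℝⁿ : xₙ < 0}, with φ and ψ having vanishing moments of all orders. Then for every f ∈ 𝓢'(ℝⁿ) and every η ∈ 𝓢(ℝⁿ) the series Σ_{j=0}^∞ ⟨e₊(φ_j * f), ψ̌_j * η⟩ converges absolutely, and η ↦ Σ_{j=0}^∞ ⟨e₊(φ_j * f), ψ̌_j * η⟩ defines a tempered distribution E_u(f) ∈ 𝓢'(ℝⁿ); that is, the series E_u(f) = Σ_{j=0}^∞ ψ_j * e₊(φ_j * f) converges in the weak* topology of 𝓢'(ℝⁿ). -/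
open MeasureTheory Filter Topology

noncomputable section

theorem one_add_norm_le_mul {V : Type*} [SeminormedAddCommGroup V] (x y : V) :
    1 + ‖y‖ ≤ (1 + ‖x‖) * (1 + ‖x - y‖) := by
  have h : ‖y‖ ≤ ‖x‖ + ‖x - y‖ := by
    simpa using norm_sub_le x (x - y)
  nlinarith [mul_nonneg (norm_nonneg x) (norm_nonneg (x - y))]

theorem one_add_norm_pow_mul_iteratedFDeriv_le {V : Type*} [NormedAddCommGroup V]
    [NormedSpace ℝ V] (k l : ℕ) (G : SchwartzMap V ℝ) (z : V) :
    (1 + ‖z‖) ^ k * ‖iteratedFDeriv ℝ l G z‖ ≤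
      2 ^ k * (Finset.Iic (k, l)).sup (schwartzSeminormFamily ℝ V ℝ) G :=
  SchwartzMap.one_add_le_sup_seminorm_apply (𝕜 := ℝ) (m := (k, l)) le_rfl le_rfl G z

theorem schwartzSeminorm_reflect_translate_le {V : Type*} [NormedAddCommGroup V]
    [NormedSpace ℝ V] (k l : ℕ) (G h : SchwartzMap V ℝ) (x : V) (hh : ∀ y, h y = G (x - y)) :
    SchwartzMap.seminorm ℝ k l h ≤
      (1 + ‖x‖) ^ k * (2 ^ k * (Finset.Iic (k, l)).sup (schwartzSeminormFamily ℝ V ℝ) G) := by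
  refine SchwartzMap.seminorm_le_bound ℝ k l h (by positivity) fun y ↦ ?_
  have hcomp : (h : V → ℝ) = (fun z ↦ G (x + z)) ∘ LinearIsometryEquiv.neg ℝ (E := V) := by
    ext y
    simp [hh, sub_eq_add_neg]
  rw [hcomp, LinearIsometryEquiv.norm_iteratedFDeriv_comp_right, iteratedFDeriv_comp_add_left,
    LinearIsometryEquiv.coe_neg, ← sub_eq_add_neg]
  calc ‖y‖ ^ k * ‖iteratedFDeriv ℝ l G (x - y)‖
      ≤ ((1 + ‖x‖) * (1 + ‖x - y‖)) ^ k * ‖iteratedFDeriv ℝ l G (x - y)‖ := by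
        gcongr
        linarith [one_add_norm_le_mul x y]
    _ = (1 + ‖x‖) ^ k * ((1 + ‖x - y‖) ^ k * ‖iteratedFDeriv ℝ l G (x - y)‖) := by
        rw [mul_pow, mul_assoc]
    _ ≤ _ := mul_le_mul_of_nonneg_left
        (one_add_norm_pow_mul_iteratedFDeriv_le k l G (x - y)) (by positivity)

theorem schwartzSeminorm_reflect_translate_sub_le {V : Type*} [NormedAddCommGroup V]
    [NormedSpace ℝ V] (k l : ℕ) (G h : SchwartzMap V ℝ) (x x' : V)
    (hh : ∀ y, h y = G (x - y) - G (x' - y)) :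
    SchwartzMap.seminorm ℝ k l h ≤
      (1 + (‖x'‖ + ‖x - x'‖)) ^ k *
        (2 ^ k * (Finset.Iic (k, l + 1)).sup (schwartzSeminormFamily ℝ V ℝ) G) * ‖x - x'‖ := by
  refine SchwartzMap.seminorm_le_bound ℝ k l h (by positivity) fun y ↦ ?_
  have hcomp : (h : V → ℝ) =
      (fun z ↦ G (x + z) - G (x' + z)) ∘ LinearIsometryEquiv.neg ℝ (E := V) := by
    ext y
    simp [hh, sub_eq_add_neg]
  have hsm : ∀ w : V, ContDiff ℝ l (fun z ↦ G (w + z)) := fun w ↦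
    (G.smooth l).comp (contDiff_const.add contDiff_id)
  rw [hcomp, LinearIsometryEquiv.norm_iteratedFDeriv_comp_right]
  have hsub : iteratedFDeriv ℝ l (fun z ↦ G (x + z) - G (x' + z)) (-y) =
      iteratedFDeriv ℝ l G (x - y) - iteratedFDeriv ℝ l G (x' - y) := by
    have := iteratedFDeriv_sub_apply (x := -y) (hsm x).contDiffAt (hsm x').contDiffAt
    rw [iteratedFDeriv_comp_add_left, iteratedFDeriv_comp_add_left] at this
    rw [sub_eq_add_neg x, sub_eq_add_neg x']
    exact this
  rw [LinearIsometryEquiv.coe_neg, hsub]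
  set B := 2 ^ k * (Finset.Iic (k, l + 1)).sup (schwartzSeminormFamily ℝ V ℝ) G
  have hdiff : Differentiable ℝ (iteratedFDeriv ℝ l G) :=
    (G.smooth (l + 1)).differentiable_iteratedFDeriv (by exact_mod_cast l.lt_succ_self)
  have hmv := (convex_closedBall (x' - y) ‖x - x'‖).norm_image_sub_le_of_norm_fderiv_le
    (𝕜 := ℝ) (f := fun z ↦ ‖y‖ ^ k • iteratedFDeriv ℝ l G z)
    (C := (1 + (‖x'‖ + ‖x - x'‖)) ^ k * B) (x := x' - y) (y := x - y)
    (fun z _ ↦ (hdiff z).fun_const_smul _)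
    ?_ (by simp) (by simp [dist_eq_norm])
  · simpa [← smul_sub, norm_smul] using hmv
  · intro z hz
    rw [fderiv_fun_const_smul (hdiff z), norm_smul, norm_fderiv_iteratedFDeriv]
    have hy : ‖y‖ ≤ (1 + (‖x'‖ + ‖x - x'‖)) * (1 + ‖z‖) := by
      have hz' : ‖(x' - y) - z‖ ≤ ‖x - x'‖ := by
        rwa [Metric.mem_closedBall, dist_comm, dist_eq_norm] at hz
      have : ‖y‖ ≤ ‖x'‖ + (‖x' - y - z‖ + ‖z‖) := by
        calc ‖y‖ = ‖x' - ((x' - y - z) + z)‖ := by congr 1; abel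
          _ ≤ ‖x'‖ + ‖(x' - y - z) + z‖ := norm_sub_le _ _
          _ ≤ _ := by gcongr; exact norm_add_le _ _
      nlinarith [norm_nonneg z, norm_nonneg x', norm_nonneg (x - x'),
        mul_nonneg (add_nonneg (norm_nonneg x') (norm_nonneg (x - x'))) (norm_nonneg z)]
    calc ‖‖y‖ ^ k‖ * ‖iteratedFDeriv ℝ (l + 1) G z‖
        ≤ ((1 + (‖x'‖ + ‖x - x'‖)) * (1 + ‖z‖)) ^ k * ‖iteratedFDeriv ℝ (l + 1) G z‖ := by
          rw [norm_pow, norm_norm]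
          gcongr
      _ = (1 + (‖x'‖ + ‖x - x'‖)) ^ k * ((1 + ‖z‖) ^ k * ‖iteratedFDeriv ℝ (l + 1) G z‖) := by
          rw [mul_pow, mul_assoc]
      _ ≤ _ := mul_le_mul_of_nonneg_left
          (one_add_norm_pow_mul_iteratedFDeriv_le k (l + 1) G z) (by positivity)

theorem SchwartzMap.exists_abs_le_sup_seminorm {V : Type*} [NormedAddCommGroup V]
    [NormedSpace ℝ V] (f : SchwartzMap V ℝ →L[ℝ] ℝ) :
    ∃ (s : Finset (ℕ × ℕ)) (C : ℝ), 0 ≤ C ∧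
      ∀ g, |f g| ≤ C * s.sup (schwartzSeminormFamily ℝ V ℝ) g := by
  obtain ⟨s, C, -, hC⟩ := Seminorm.bound_of_continuous (schwartz_withSeminorms ℝ V ℝ)
    ((normSeminorm ℝ ℝ).comp f.toLinearMap) (by
      change Continuous fun g ↦ ‖f g‖
      fun_prop)
  exact ⟨s, C, C.2, fun g ↦ hC g⟩

theorem continuous_apply_reflect_translate {V : Type*} [NormedAddCommGroup V]
    [NormedSpace ℝ V] (f : SchwartzMap V ℝ →L[ℝ] ℝ) (G : SchwartzMap V ℝ)
    (t : V → SchwartzMap V ℝ) (ht : ∀ x y, t x y = G (x - y)) :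
    Continuous fun x ↦ f (t x) := by
  obtain ⟨s, C, hC, hf⟩ := SchwartzMap.exists_abs_le_sup_seminorm f
  rw [continuous_iff_continuousAt]
  intro x'
  rw [ContinuousAt, tendsto_iff_norm_sub_tendsto_zero]
  let b : V → ℝ := fun x ↦ C * ∑ i ∈ s, (1 + (‖x'‖ + ‖x - x'‖)) ^ i.1 *
    (2 ^ i.1 * (Finset.Iic (i.1, i.2 + 1)).sup (schwartzSeminormFamily ℝ V ℝ) G) * ‖x - x'‖
  refine squeeze_zero (g := b) (fun _ ↦ norm_nonneg _) (fun x ↦ ?_) ?_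
  · rw [← map_sub, Real.norm_eq_abs]
    refine (hf _).trans (mul_le_mul_of_nonneg_left ?_ hC)
    refine Seminorm.finset_sup_apply_le (Finset.sum_nonneg fun i _ ↦ by positivity) fun i hi ↦ ?_
    refine (schwartzSeminorm_reflect_translate_sub_le i.1 i.2 G (t x - t x') x x' fun y ↦ ?_).trans
      (Finset.single_le_sum (f := fun i : ℕ × ℕ ↦ (1 + (‖x'‖ + ‖x - x'‖)) ^ i.1 *
        (2 ^ i.1 * (Finset.Iic (i.1, i.2 + 1)).sup (schwartzSeminormFamily ℝ V ℝ) G) * ‖x - x'‖)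
        (fun i _ ↦ by positivity) hi)
    simp [ht]
  · have hb : Continuous b := by fun_prop
    simpa [b] using hb.tendsto x'

theorem integrable_one_add_norm_pow_mul {m : ℕ} (θ : SchwartzMap (Fin m → ℝ) ℝ) (k : ℕ) :
    Integrable fun z : Fin m → ℝ ↦ (1 + ‖z‖) ^ k * ‖θ z‖ := by
  have h : Integrable fun z : Fin m → ℝ ↦ ∑ i ∈ Finset.range (k + 1),
      (k.choose i : ℝ) * (‖z‖ ^ i * ‖θ z‖) :=
    integrable_finsetSum _ fun i _ ↦ (θ.integrable_pow_mul volume i).const_mul _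
  refine h.congr (ae_of_all _ fun z ↦ ?_)
  simp only [add_comm (1 : ℝ), add_pow, one_pow, mul_one, Finset.sum_mul]
  exact Finset.sum_congr rfl fun i _ ↦ by ring

theorem abs_prod_coord_le {m k : ℕ} (r : Fin k → Fin m) (z : Fin m → ℝ) :
    |∏ i, z (r i)| ≤ (1 + ‖z‖) ^ k := by
  rw [Finset.abs_prod]
  calc ∏ i, |z (r i)| ≤ ∏ _i : Fin k, (1 + ‖z‖) :=
        Finset.prod_le_prod (fun _ _ ↦ abs_nonneg _) fun i _ ↦ by
          have := norm_le_pi_norm z (r i)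
          rw [Real.norm_eq_abs] at this
          linarith
    _ = _ := by simp

theorem integrable_mul_prod_coord {m k : ℕ} (θ : SchwartzMap (Fin m → ℝ) ℝ)
    (r : Fin k → Fin m) : Integrable fun z : Fin m → ℝ ↦ θ z * ∏ i, z (r i) := by
  refine (integrable_one_add_norm_pow_mul θ k).mono' ?_ (ae_of_all _ fun z ↦ ?_)
  · exact (θ.continuous.mul (by fun_prop)).aestronglyMeasurable
  · rw [norm_mul, mul_comm]
    exact mul_le_mul_of_nonneg_right (abs_prod_coord_le r z) (norm_nonneg _)

theorem integral_mul_prod_coord_eq_zero {m k N : ℕ} (hk : k < N)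
    (θ : (Fin m → ℝ) → ℝ)
    (hθ : ∀ α : Fin m → ℕ, ∑ i, α i < N → ∫ z, (∏ i, z i ^ α i) * θ z = 0)
    (r : Fin k → Fin m) : ∫ z : Fin m → ℝ, θ z * ∏ i, z (r i) = 0 := by
  rw [← hθ (fun s ↦ (Finset.univ.filter fun i ↦ r i = s).card) ?_]
  · congr 1 with z
    rw [mul_comm, ← Finset.prod_fiberwise' Finset.univ r z]
    simp
  · rw [← Finset.card_eq_sum_card_fiberwise (f := r) (fun i _ ↦ Finset.mem_univ _)]
    simpa using hk

theorem multilinear_diag_scale_apply {m k : ℕ}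
    (D : ContinuousMultilinearMap ℝ (fun _ : Fin k ↦ (Fin m → ℝ)) ℝ) (c z : Fin m → ℝ) :
    D (fun _ ↦ fun i ↦ c i * z i) =
      ∑ r : Fin k → Fin m, (∏ i, z (r i)) *
        D (fun i ↦ c (r i) • (Pi.single (r i) (1 : ℝ) : Fin m → ℝ)) := by
  have h : (fun i ↦ c i * z i) = ∑ s : Fin m, z s • (c s • (Pi.single s (1 : ℝ) : Fin m → ℝ)) := by
    ext i
    simp [Finset.sum_apply, Pi.single_apply, mul_comm]
  rw [h, D.map_sum (fun _ s ↦ z s • (c s • (Pi.single s (1 : ℝ) : Fin m → ℝ)))]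
  exact Finset.sum_congr rfl fun r _ ↦ by rw [D.map_smul_univ, smul_eq_mul]

theorem integrable_mul_multilinear_diag {m k : ℕ} (θ : SchwartzMap (Fin m → ℝ) ℝ)
    (D : ContinuousMultilinearMap ℝ (fun _ : Fin k ↦ (Fin m → ℝ)) ℝ) (c : Fin m → ℝ) :
    Integrable fun z : Fin m → ℝ ↦ θ z * D (fun _ ↦ fun i ↦ c i * z i) := by
  simp_rw [multilinear_diag_scale_apply, Finset.mul_sum, ← mul_assoc]
  exact integrable_finsetSum _ fun r _ ↦ (integrable_mul_prod_coord θ r).mul_const _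

theorem integral_mul_multilinear_diag_eq_zero {m k N : ℕ} (hk : k < N)
    (θ : SchwartzMap (Fin m → ℝ) ℝ)
    (hθ : ∀ α : Fin m → ℕ, ∑ i, α i < N → ∫ z, (∏ i, z i ^ α i) * θ z = 0)
    (D : ContinuousMultilinearMap ℝ (fun _ : Fin k ↦ (Fin m → ℝ)) ℝ) (c : Fin m → ℝ) :
    ∫ z : Fin m → ℝ, θ z * D (fun _ ↦ fun i ↦ c i * z i) = 0 := by
  simp_rw [multilinear_diag_scale_apply, Finset.mul_sum, ← mul_assoc]
  rw [integral_finsetSum _ fun r _ ↦ (integrable_mul_prod_coord θ r).mul_const _]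
  refine Finset.sum_eq_zero fun r _ ↦ ?_
  rw [integral_mul_const, integral_mul_prod_coord_eq_zero hk θ hθ r, zero_mul]

theorem abs_sub_taylor_le {V : Type*} [NormedAddCommGroup V] [NormedSpace ℝ V] (N : ℕ)
    {η : V → ℝ} (hη : ContDiff ℝ N η) (x w : V) {M : ℝ}
    (hM : ∀ t ∈ Set.Icc (0 : ℝ) 1, ‖iteratedFDeriv ℝ N η (x + t • w)‖ ≤ M) :
    |η (x + w) - ∑ k ∈ Finset.range N,
      (k.factorial : ℝ)⁻¹ * iteratedFDeriv ℝ k η x (fun _ ↦ w)| ≤ M * ‖w‖ ^ N := by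
  cases N with
  | zero => simpa using hM 1 (by simp)
  | succ n =>
    have h := map_add_eq_sum_add_integral_iteratedFDeriv (n := n) (f := η) (x := x) (y := w)
      fun t _ ↦ by exact_mod_cast hη.contDiffAt
    simp only [smul_eq_mul] at h
    rw [h, add_sub_cancel_left, abs_mul, abs_of_nonneg (by positivity)]
    have hM0 : 0 ≤ M := (norm_nonneg _).trans (hM 0 (by simp))
    have hint : |∫ t in (0 : ℝ)..1, (1 - t) ^ n *
        iteratedFDeriv ℝ (n + 1) η (x + t • w) (fun _ ↦ w)| ≤ M * ‖w‖ ^ (n + 1) := by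
      have := intervalIntegral.norm_integral_le_of_norm_le_const (a := (0 : ℝ)) (b := 1)
        (C := M * ‖w‖ ^ (n + 1)) (f := fun t ↦ (1 - t) ^ n *
          iteratedFDeriv ℝ (n + 1) η (x + t • w) (fun _ ↦ w)) ?_
      · simpa using this
      · intro t ht
        rw [Set.uIoc_of_le zero_le_one] at ht
        have h1 : ‖(1 - t) ^ n‖ ≤ 1 := by
          rw [norm_pow, Real.norm_eq_abs, abs_of_nonneg (by linarith [ht.2])]
          exact pow_le_one₀ (by linarith [ht.2]) (by linarith [ht.1])
        have h2 : ‖iteratedFDeriv ℝ (n + 1) η (x + t • w) (fun _ ↦ w)‖ ≤ M * ‖w‖ ^ (n + 1) := by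
          refine ((iteratedFDeriv ℝ (n + 1) η (x + t • w)).le_opNorm _).trans ?_
          simp only [Finset.prod_const, Finset.card_univ, Fintype.card_fin]
          gcongr
          exact hM t ⟨ht.1.le, ht.2⟩
        rw [norm_mul]
        calc _ ≤ 1 * (M * ‖w‖ ^ (n + 1)) := by gcongr
          _ = _ := one_mul _
    have hfac : ((n.factorial : ℝ))⁻¹ ≤ 1 :=
      inv_le_one_of_one_le₀ (by exact_mod_cast n.factorial_pos)
    calc _ ≤ 1 * (M * ‖w‖ ^ (n + 1)) := by gcongr
      _ = _ := one_mul _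

/-- Pairing a Schwartz function with `N` vanishing moments against a translated and contracted
Schwartz function gains the `N`-th power of the contraction factor and decays rapidly. -/
theorem exists_integral_mul_contraction_le {m : ℕ} (N K : ℕ) (θ : SchwartzMap (Fin m → ℝ) ℝ)
    (hθ : ∀ α : Fin m → ℕ, ∑ i, α i < N → ∫ z, (∏ i, z i ^ α i) * θ z = 0) :
    ∃ C : ℝ, 0 ≤ C ∧ ∀ (ε : ℝ) (c : Fin m → ℝ), ε ≤ 1 → 0 ≤ ε → (∀ i, |c i| ≤ ε) →
      ∀ (η : SchwartzMap (Fin m → ℝ) ℝ) (x : Fin m → ℝ),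
        (1 + ‖x‖) ^ K * |∫ z, θ z * η (x + fun i ↦ c i * z i)| ≤
          C * ε ^ N * (Finset.Iic (K, N)).sup (schwartzSeminormFamily ℝ (Fin m → ℝ) ℝ) η := by
  refine ⟨2 ^ K * ∫ z, (1 + ‖z‖) ^ (N + K) * ‖θ z‖, by positivity,
    fun ε c hε1 hε0 hc η x ↦ ?_⟩
  set P := (Finset.Iic (K, N)).sup (schwartzSeminormFamily ℝ (Fin m → ℝ) ℝ) η
  have hP0 : 0 ≤ P := apply_nonneg _ _
  let w : (Fin m → ℝ) → (Fin m → ℝ) := fun z i ↦ c i * z i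
  have hw : ∀ z, ‖w z‖ ≤ ε * ‖z‖ := fun z ↦ by
    refine (pi_norm_le_iff_of_nonneg (by positivity)).2 fun i ↦ ?_
    rw [norm_mul]
    exact mul_le_mul (hc i) (norm_le_pi_norm z i) (norm_nonneg _) hε0
  let T : (Fin m → ℝ) → ℝ := fun z ↦ ∑ k ∈ Finset.range N,
    (k.factorial : ℝ)⁻¹ * iteratedFDeriv ℝ k η x (fun _ ↦ w z)
  have hTint : ∀ k ∈ Finset.range N, Integrable fun z ↦
      (k.factorial : ℝ)⁻¹ * (θ z * iteratedFDeriv ℝ k η x (fun _ ↦ w z)) := fun k _ ↦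
    (integrable_mul_multilinear_diag θ (iteratedFDeriv ℝ k η x) c).const_mul _
  have hTeq : ∀ z, θ z * T z = ∑ k ∈ Finset.range N,
      (k.factorial : ℝ)⁻¹ * (θ z * iteratedFDeriv ℝ k η x (fun _ ↦ w z)) := fun z ↦ by
    simp only [T, Finset.mul_sum]
    exact Finset.sum_congr rfl fun k _ ↦ by ring
  have hTi : Integrable fun z ↦ θ z * T z := by
    simp_rw [hTeq]
    exact integrable_finsetSum _ hTint
  have hT0 : ∫ z, θ z * T z = 0 := by
    simp_rw [hTeq]
    rw [integral_finsetSum _ hTint]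
    refine Finset.sum_eq_zero fun k hk ↦ ?_
    rw [integral_const_mul, integral_mul_multilinear_diag_eq_zero (Finset.mem_range.1 hk) θ hθ,
      mul_zero]
  have hwc : Continuous w := by fun_prop
  have hηi : Integrable fun z ↦ θ z * η (x + w z) := by
    refine (θ.integrable.norm.mul_const (SchwartzMap.seminorm ℝ 0 0 η)).mono'
      (θ.continuous.mul (η.continuous.comp (by fun_prop))).aestronglyMeasurable
      (ae_of_all _ fun z ↦ ?_)
    rw [norm_mul]
    gcongr
    exact η.norm_le_seminorm ℝ _
  have hrem : ∀ z, (1 + ‖x‖) ^ K * |η (x + w z) - T z| ≤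
      2 ^ K * P * ε ^ N * (1 + ‖z‖) ^ (N + K) := fun z ↦ by
    have hx0 : 0 < (1 + ‖x‖) ^ K := by positivity
    have key : |η (x + w z) - T z| ≤
        (1 + ‖z‖) ^ K * (2 ^ K * P) / (1 + ‖x‖) ^ K * ‖w z‖ ^ N := by
      refine abs_sub_taylor_le N (η.smooth N) x (w z) fun t ht ↦ ?_
      rw [le_div_iff₀ hx0, mul_comm]
      have htw : ‖t • w z‖ ≤ ‖z‖ := by
        rw [norm_smul, Real.norm_eq_abs, abs_of_nonneg ht.1]
        calc t * ‖w z‖ ≤ 1 * (1 * ‖z‖) := by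
              gcongr
              · exact ht.2
              · exact (hw z).trans (by gcongr)
          _ = ‖z‖ := by ring
      have hx : 1 + ‖x‖ ≤ (1 + ‖z‖) * (1 + ‖x + t • w z‖) := by
        have := one_add_norm_le_mul (x + t • w z) x
        rw [add_sub_cancel_left] at this
        refine this.trans ?_
        rw [mul_comm]
        gcongr
      calc (1 + ‖x‖) ^ K * ‖iteratedFDeriv ℝ N η (x + t • w z)‖
          ≤ ((1 + ‖z‖) * (1 + ‖x + t • w z‖)) ^ K * ‖iteratedFDeriv ℝ N η (x + t • w z)‖ := by
            gcongr
        _ = (1 + ‖z‖) ^ K *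
            ((1 + ‖x + t • w z‖) ^ K * ‖iteratedFDeriv ℝ N η (x + t • w z)‖) := by
            rw [mul_pow, mul_assoc]
        _ ≤ _ := mul_le_mul_of_nonneg_left
            (one_add_norm_pow_mul_iteratedFDeriv_le K N η _) (by positivity)
    calc (1 + ‖x‖) ^ K * |η (x + w z) - T z|
        ≤ (1 + ‖x‖) ^ K * ((1 + ‖z‖) ^ K * (2 ^ K * P) / (1 + ‖x‖) ^ K * ‖w z‖ ^ N) := by
          gcongr
      _ = (1 + ‖z‖) ^ K * (2 ^ K * P) * ‖w z‖ ^ N := by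
          field_simp
      _ ≤ (1 + ‖z‖) ^ K * (2 ^ K * P) * (ε * (1 + ‖z‖)) ^ N := by
          gcongr
          exact (hw z).trans (by gcongr; linarith)
      _ = _ := by rw [mul_pow, pow_add]; ring
  calc (1 + ‖x‖) ^ K * |∫ z, θ z * η (x + w z)|
      = |∫ z, (1 + ‖x‖) ^ K * (θ z * (η (x + w z) - T z))| := by
        rw [integral_const_mul, abs_mul, abs_of_nonneg (a := (1 + ‖x‖) ^ K) (by positivity)]
        simp_rw [mul_sub]
        rw [integral_sub hηi hTi, hT0, sub_zero]
    _ ≤ ∫ z, 2 ^ K * P * ε ^ N * ((1 + ‖z‖) ^ (N + K) * ‖θ z‖) := by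
        rw [← Real.norm_eq_abs]
        refine norm_integral_le_of_norm_le ((integrable_one_add_norm_pow_mul θ _).const_mul _)
          (ae_of_all _ fun z ↦ ?_)
        rw [norm_mul, norm_mul, Real.norm_of_nonneg (by positivity), Real.norm_eq_abs (_ - _)]
        calc _ = ((1 + ‖x‖) ^ K * |η (x + w z) - T z|) * ‖θ z‖ := by ring
          _ ≤ (2 ^ K * P * ε ^ N * (1 + ‖z‖) ^ (N + K)) * ‖θ z‖ :=
            mul_le_mul_of_nonneg_right (hrem z) (norm_nonneg _)
          _ = _ := by ring
    _ = _ := by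
        rw [integral_const_mul]
        ring

/-- The diagonal scaling `x ↦ (c₁x₁, …, cₘxₘ)` with nonzero factors. -/
def diagScale {m : ℕ} (c : Fin m → ℝ) (hc : ∀ i, c i ≠ 0) : (Fin m → ℝ) ≃L[ℝ] (Fin m → ℝ) :=
  ContinuousLinearEquiv.piCongrRight fun i ↦
    ContinuousLinearEquiv.unitsEquivAut ℝ (Units.mk0 (c i) (hc i))

theorem diagScale_apply {m : ℕ} (c : Fin m → ℝ) (hc : ∀ i, c i ≠ 0) (x : Fin m → ℝ) :
    diagScale c hc x = fun i ↦ c i * x i := by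
  ext i
  simp [diagScale, mul_comm]

theorem norm_diagScale_le {m : ℕ} (c : Fin m → ℝ) (hc : ∀ i, c i ≠ 0) {R : ℝ} (hR : 0 ≤ R)
    (hcR : ∀ i, |c i| ≤ R) : ‖(diagScale c hc : (Fin m → ℝ) →L[ℝ] (Fin m → ℝ))‖ ≤ R := by
  refine ContinuousLinearMap.opNorm_le_bound _ hR fun x ↦ ?_
  rw [ContinuousLinearEquiv.coe_coe, diagScale_apply]
  refine (pi_norm_le_iff_of_nonneg (by positivity)).2 fun i ↦ ?_
  rw [norm_mul]
  exact mul_le_mul (hcR i) (norm_le_pi_norm x i) (norm_nonneg _) hR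

theorem norm_le_norm_diagScale {m : ℕ} (c : Fin m → ℝ) (hc : ∀ i, c i ≠ 0)
    (hc1 : ∀ i, 1 ≤ c i) (x : Fin m → ℝ) : ‖x‖ ≤ ‖diagScale c hc x‖ := by
  refine (pi_norm_le_iff_of_nonneg (norm_nonneg _)).2 fun i ↦ ?_
  refine le_trans ?_ (norm_le_pi_norm (diagScale c hc x) i)
  rw [diagScale_apply, norm_mul]
  refine le_mul_of_one_le_left (norm_nonneg _) ?_
  exact (hc1 i).trans (le_abs_self _)

theorem integral_comp_diagScale {m : ℕ} (c : Fin m → ℝ) (hc : ∀ i, c i ≠ 0)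
    (g : (Fin m → ℝ) → ℝ) :
    |∏ i, c i| * ∫ x : Fin m → ℝ, g (fun i ↦ c i * x i) = ∫ x, g x := by
  have h := integral_image_eq_integral_abs_det_fderiv_smul (volume : Measure (Fin m → ℝ))
    (f := diagScale c hc) (f' := fun _ ↦ (diagScale c hc : (Fin m → ℝ) →L[ℝ] (Fin m → ℝ)))
    MeasurableSet.univ (fun x _ ↦ (diagScale c hc).hasFDerivAt.hasFDerivWithinAt)
    (diagScale c hc).injective.injOn g
  have hdet : (diagScale c hc : (Fin m → ℝ) →L[ℝ] (Fin m → ℝ)).det = ∏ i, c i := by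
    have : (diagScale c hc : (Fin m → ℝ) →L[ℝ] (Fin m → ℝ)).toLinearMap =
        Matrix.toLin' (Matrix.diagonal c) := by
      ext x i
      simp [diagScale_apply, Matrix.mulVec_diagonal]
    rw [ContinuousLinearMap.det, this, LinearMap.det_toLin', Matrix.det_diagonal]
  rw [hdet, Set.image_univ, (diagScale c hc).surjective.range_eq] at h
  simp only [setIntegral_univ, smul_eq_mul, integral_const_mul, diagScale_apply] at h
  exact h.symm

theorem schwartzSeminorm_comp_diagScale_le {m : ℕ} (c : Fin m → ℝ) (hc : ∀ i, c i ≠ 0)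
    (hc1 : ∀ i, 1 ≤ c i) {R : ℝ} (hR : 0 ≤ R) (hcR : ∀ i, |c i| ≤ R)
    (θ : SchwartzMap (Fin m → ℝ) ℝ) (k l : ℕ) :
    SchwartzMap.seminorm ℝ k l
      (SchwartzMap.compCLMOfContinuousLinearEquiv ℝ (diagScale c hc) θ) ≤
        R ^ l * SchwartzMap.seminorm ℝ k l θ := by
  refine SchwartzMap.seminorm_le_bound ℝ k l _ (by positivity) fun y ↦ ?_
  have h := (diagScale c hc : (Fin m → ℝ) →L[ℝ] (Fin m → ℝ)).iteratedFDeriv_comp_right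
    (θ.smooth l) y (i := l) le_rfl
  rw [SchwartzMap.compCLMOfContinuousLinearEquiv_apply]
  change ‖y‖ ^ k * ‖iteratedFDeriv ℝ l (θ ∘ (diagScale c hc : (Fin m → ℝ) →L[ℝ] (Fin m → ℝ))) y‖ ≤ _
  rw [h]
  calc _ ≤ ‖diagScale c hc y‖ ^ k * (‖iteratedFDeriv ℝ l θ (diagScale c hc y)‖ * R ^ l) := by
        gcongr
        · exact norm_le_norm_diagScale c hc hc1 y
        · refine (ContinuousMultilinearMap.norm_compContinuousLinearMap_le _ _).trans ?_
          simp only [Finset.prod_const, Finset.card_univ, Fintype.card_fin]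
          rw [ContinuousLinearEquiv.coe_coe]
          gcongr
          exact norm_diagScale_le c hc hR hcR
    _ = R ^ l * (‖diagScale c hc y‖ ^ k * ‖iteratedFDeriv ℝ l θ (diagScale c hc y)‖) := by ring
    _ ≤ _ := by
        gcongr
        exact SchwartzMap.le_seminorm ℝ k l θ _

/-- Anisotropic dilations of Schwartz functions are Schwartz functions, and each of their
seminorms grows at most geometrically in the dilation index. -/
theorem exists_anisoDil_schwartz {m : ℕ} (a : Fin m → ℝ) (ha : ∀ i, 1 ≤ a i)
    (θ₀ θ : SchwartzMap (Fin m → ℝ) ℝ) :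
    ∃ (B : ℕ) (G : ℕ → SchwartzMap (Fin m → ℝ) ℝ),
      (∀ j x, G j x = anisoDil a θ₀ θ j x) ∧
      ∀ k l, ∃ C : ℝ, 0 ≤ C ∧
        ∀ j, SchwartzMap.seminorm ℝ k l (G j) ≤ C * (2 ^ (B * (l + 1))) ^ j := by
  have hpos : ∀ (j : ℕ) i, (2 : ℝ) ^ ((j : ℝ) * a i) ≠ 0 := fun j i ↦ by positivity
  obtain ⟨B, hB⟩ := exists_nat_ge (∑ i, a i)
  have hpow : ∀ (j : ℕ) (s : ℝ), s ≤ ∑ i, a i → (2 : ℝ) ^ ((j : ℝ) * s) ≤ (2 ^ B) ^ j := by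
    intro j s hs
    calc (2 : ℝ) ^ ((j : ℝ) * s) ≤ (2 : ℝ) ^ ((B * j : ℕ) : ℝ) := by
          refine Real.rpow_le_rpow_of_exponent_le one_le_two ?_
          push_cast
          rw [mul_comm]
          gcongr
          exact hs.trans hB
      _ = (2 ^ B) ^ j := by rw [Real.rpow_natCast, pow_mul]
  refine ⟨B, fun j ↦ if j = 0 then θ₀ else (2 : ℝ) ^ ((j : ℝ) * ∑ i, a i) •
    SchwartzMap.compCLMOfContinuousLinearEquiv ℝ (diagScale _ (hpos j)) θ, fun j x ↦ ?_,
    fun k l ↦ ⟨SchwartzMap.seminorm ℝ k l θ₀ + SchwartzMap.seminorm ℝ k l θ, by positivity,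
      fun j ↦ ?_⟩⟩
  · by_cases hj : j = 0
    · simp [hj, anisoDil]
    · simp [hj, anisoDil, diagScale_apply]
  · by_cases hj : j = 0
    · simp [hj]
    · simp only [hj, if_false]
      rw [map_smul_eq_mul, Real.norm_of_nonneg (by positivity)]
      have h := schwartzSeminorm_comp_diagScale_le _ (hpos j)
        (fun i ↦ Real.one_le_rpow one_le_two (by have := ha i; positivity))
        (R := (2 ^ B) ^ j) (by positivity) (fun i ↦ by
          rw [abs_of_nonneg (by positivity)]
          exact hpow j _ (Finset.single_le_sum (fun i _ ↦ zero_le_one.trans (ha i))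
            (Finset.mem_univ i))) θ k l
      calc _ ≤ (2 ^ B) ^ j * (((2 ^ B) ^ j) ^ l * SchwartzMap.seminorm ℝ k l θ) := by
            gcongr
            exact hpow j _ le_rfl
        _ = SchwartzMap.seminorm ℝ k l θ * (2 ^ (B * (l + 1))) ^ j := by
            rw [pow_mul (2 : ℝ) B, ← pow_mul _ (l + 1), mul_comm (l + 1) j, pow_mul _ j, pow_succ]
            ring
        _ ≤ _ := by
            gcongr
            exact le_add_of_nonneg_left (apply_nonneg _ _)

theorem exists_apply_translate_anisoDil_le {m : ℕ} (a : Fin m → ℝ) (ha : ∀ i, 1 ≤ a i)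
    (φ₀ φ : SchwartzMap (Fin m → ℝ) ℝ) (f : SchwartzMap (Fin m → ℝ) ℝ →L[ℝ] ℝ)
    (tr : ℕ → (Fin m → ℝ) → SchwartzMap (Fin m → ℝ) ℝ)
    (htr : ∀ j x y, tr j x y = anisoDil a φ₀ φ j (x - y)) :
    (∀ j, Continuous fun x ↦ f (tr j x)) ∧
    ∃ (A : ℝ) (M q : ℕ), 0 ≤ A ∧ ∀ j x, |f (tr j x)| ≤ A * (2 ^ q) ^ j * (1 + ‖x‖) ^ M := by
  obtain ⟨B, G, hG, hGb⟩ := exists_anisoDil_schwartz a ha φ₀ φ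
  have htrG : ∀ j x y, tr j x y = G j (x - y) := fun j x y ↦ by rw [htr, hG]
  refine ⟨fun j ↦ continuous_apply_reflect_translate f (G j) (tr j) (htrG j), ?_⟩
  obtain ⟨s, C, hC, hf⟩ := SchwartzMap.exists_abs_le_sup_seminorm f
  choose D hD hDb using hGb
  let M := s.sup Prod.fst
  let L := s.sup Prod.snd
  let b : ℕ × ℕ → ℝ := fun i ↦ 2 ^ i.1 * ∑ i' ∈ Finset.Iic i, D i'.1 i'.2
  have hb : ∀ i, 0 ≤ b i := fun i ↦
    mul_nonneg (by positivity) (Finset.sum_nonneg fun i' _ ↦ hD _ _)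
  refine ⟨C * ∑ i ∈ s, b i, M, B * (L + 1), mul_nonneg hC (Finset.sum_nonneg fun i _ ↦ hb i),
    fun j x ↦ (hf _).trans ?_⟩
  rw [mul_assoc, mul_assoc]
  refine mul_le_mul_of_nonneg_left ?_ hC
  have hsum : 0 ≤ ∑ i ∈ s, b i := Finset.sum_nonneg fun i _ ↦ hb i
  refine Seminorm.finset_sup_apply_le (by positivity) fun i hi ↦ ?_
  have hM : i.1 ≤ M := Finset.le_sup (f := Prod.fst) hi
  have hL : i.2 ≤ L := Finset.le_sup (f := Prod.snd) hi
  have hsup : (Finset.Iic i).sup (schwartzSeminormFamily ℝ (Fin m → ℝ) ℝ) (G j) ≤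
      (∑ i' ∈ Finset.Iic i, D i'.1 i'.2) * (2 ^ (B * (L + 1))) ^ j := by
    refine Seminorm.finset_sup_apply_le
      (mul_nonneg (Finset.sum_nonneg fun i' _ ↦ hD _ _) (by positivity)) fun i' hi' ↦ ?_
    refine (hDb i'.1 i'.2 j).trans ?_
    have : i'.2 ≤ L := (Finset.mem_Iic.1 hi').2.trans hL
    refine mul_le_mul (Finset.single_le_sum (f := fun i' : ℕ × ℕ ↦ D i'.1 i'.2)
      (fun i' _ ↦ hD _ _) hi') ?_ (by positivity) (Finset.sum_nonneg fun i' _ ↦ hD _ _)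
    gcongr
    exact one_le_two
  calc schwartzSeminormFamily ℝ (Fin m → ℝ) ℝ i (tr j x)
      ≤ (1 + ‖x‖) ^ i.1 *
        (2 ^ i.1 * (Finset.Iic i).sup (schwartzSeminormFamily ℝ (Fin m → ℝ) ℝ) (G j)) :=
        schwartzSeminorm_reflect_translate_le i.1 i.2 (G j) (tr j x) x (htrG j x)
    _ ≤ (1 + ‖x‖) ^ M *
        (2 ^ i.1 * ((∑ i' ∈ Finset.Iic i, D i'.1 i'.2) * (2 ^ (B * (L + 1))) ^ j)) := by
        gcongr
        linarith [norm_nonneg x]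
    _ = b i * ((2 ^ (B * (L + 1))) ^ j * (1 + ‖x‖) ^ M) := by
        simp only [b]
        ring
    _ ≤ _ := by
        gcongr
        exact Finset.single_le_sum (fun i _ ↦ hb i) hi

theorem exists_integral_anisoDil_mul_le {m : ℕ} (a : Fin m → ℝ) (ha : ∀ i, 1 ≤ a i)
    (ψ₀ ψ : SchwartzMap (Fin m → ℝ) ℝ) (hψ : VanishingMoments ψ) (N K : ℕ) :
    ∃ C : ℝ, 0 ≤ C ∧ ∀ (j : ℕ) (η : SchwartzMap (Fin m → ℝ) ℝ) (x : Fin m → ℝ),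
      (1 + ‖x‖) ^ K * |∫ y, anisoDil a ψ₀ ψ j (y - x) * η y| ≤
        C * (((1 / 2) ^ j) ^ N *
          (Finset.Iic (K, N)).sup (schwartzSeminormFamily ℝ (Fin m → ℝ) ℝ) η) := by
  obtain ⟨C₀, hC₀, h₀⟩ := exists_integral_mul_contraction_le 0 K ψ₀ (by simp)
  obtain ⟨C₁, hC₁, h₁⟩ := exists_integral_mul_contraction_le N K ψ (fun α _ ↦ hψ α)
  refine ⟨C₀ + C₁, by positivity, fun j η x ↦ ?_⟩
  have hshift : ∫ y, anisoDil a ψ₀ ψ j (y - x) * η y = ∫ y, anisoDil a ψ₀ ψ j y * η (x + y) := by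
    rw [← integral_add_right_eq_self _ x]
    simp [add_comm]
  rw [hshift]
  by_cases hj : j = 0
  · subst hj
    have h := h₀ 1 (fun _ ↦ 1) le_rfl zero_le_one (by simp) η x
    have hmono : (Finset.Iic (K, 0)).sup (schwartzSeminormFamily ℝ (Fin m → ℝ) ℝ) η ≤
        (Finset.Iic (K, N)).sup (schwartzSeminormFamily ℝ (Fin m → ℝ) ℝ) η :=
      Finset.sup_mono (f := schwartzSeminormFamily ℝ (Fin m → ℝ) ℝ)
        (Finset.Iic_subset_Iic.2 (Prod.mk_le_mk.2 ⟨le_rfl, Nat.zero_le N⟩)) η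
    simp only [one_mul, pow_zero, mul_one] at h
    simp only [anisoDil, if_true, pow_zero, one_pow, one_mul]
    refine h.trans ?_
    gcongr
    linarith
  · have hcv : ∫ y, anisoDil a ψ₀ ψ j y * η (x + y) =
        ∫ z, ψ z * η (x + fun i ↦ ((2 : ℝ) ^ ((j : ℝ) * a i))⁻¹ * z i) := by
      rw [← integral_comp_diagScale (fun i ↦ (2 : ℝ) ^ ((j : ℝ) * a i)) (fun i ↦ by positivity)
        (fun z ↦ ψ z * η (x + fun i ↦ ((2 : ℝ) ^ ((j : ℝ) * a i))⁻¹ * z i)),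
        abs_of_nonneg (by positivity), ← Real.rpow_sum_of_pos two_pos, ← Finset.mul_sum,
        ← integral_const_mul]
      congr 1 with y
      have : (fun i ↦ ((2 : ℝ) ^ ((j : ℝ) * a i))⁻¹ * ((2 : ℝ) ^ ((j : ℝ) * a i) * y i)) = y := by
        ext i
        rw [inv_mul_cancel_left₀ (by positivity)]
      rw [this]
      simp only [anisoDil, hj, if_false, mul_assoc]
    have h := h₁ ((1 / 2) ^ j) (fun i ↦ ((2 : ℝ) ^ ((j : ℝ) * a i))⁻¹)
      (pow_le_one₀ (by norm_num) (by norm_num)) (by positivity) (fun i ↦ by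
        rw [abs_of_nonneg (by positivity), one_div, inv_pow]
        refine inv_anti₀ (by positivity) ?_
        rw [← Real.rpow_natCast]
        exact Real.rpow_le_rpow_of_exponent_le one_le_two
          (le_mul_of_one_le_right (by positivity) (ha i))) η x
    rw [hcv]
    refine h.trans ?_
    rw [mul_assoc]
    gcongr
    linarith

/-- A series of bilinear half-space pairings with geometrically growing tempered factors and
rapidly decaying test factors converges absolutely to a tempered distribution. -/
theorem exists_hasSum_setIntegral_of_decay {m : ℕ} (S : Set (Fin m → ℝ))
    (F : ℕ → (Fin m → ℝ) → ℝ) (hF : ∀ j, Continuous (F j))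
    (G : ℕ → SchwartzMap (Fin m → ℝ) ℝ) {A C : ℝ} {M q : ℕ} (i : ℕ × ℕ) (hA : 0 ≤ A)
    (hC : 0 ≤ C)
    (hFb : ∀ j x, |F j x| ≤ A * (2 ^ q) ^ j * (1 + ‖x‖) ^ M)
    (hGb : ∀ (j : ℕ) (η : SchwartzMap (Fin m → ℝ) ℝ) (x : Fin m → ℝ),
      (1 + ‖x‖) ^ (M + (m + 1)) * |∫ y, G j (y - x) * η y| ≤
        C * (((1 / 2) ^ j) ^ (q + 1) *
          (Finset.Iic i).sup (schwartzSeminormFamily ℝ (Fin m → ℝ) ℝ) η)) :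
    ∃ E : SchwartzMap (Fin m → ℝ) ℝ →L[ℝ] ℝ, ∀ η,
      Summable (fun j ↦ |∫ x in S, F j x * ∫ y, G j (y - x) * η y|) ∧
      HasSum (fun j ↦ ∫ x in S, F j x * ∫ y, G j (y - x) * η y) (E η) := by
  let P : Seminorm ℝ (SchwartzMap (Fin m → ℝ) ℝ) :=
    (Finset.Iic i).sup (schwartzSeminormFamily ℝ (Fin m → ℝ) ℝ)
  let D : ℕ → SchwartzMap (Fin m → ℝ) ℝ → (Fin m → ℝ) → ℝ := fun j η x ↦
    ∫ y, G j (y - x) * η y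
  let u : (Fin m → ℝ) → ℝ := fun x ↦ (1 + ‖x‖) ^ (-((m + 1 : ℕ) : ℝ))
  have hu : Integrable u := integrable_one_add_norm (by simp)
  have hDint : ∀ j (η : SchwartzMap (Fin m → ℝ) ℝ) x, Integrable fun y ↦ G j (y - x) * η y := by
    intro j η x
    refine (η.integrable.norm.const_mul (SchwartzMap.seminorm ℝ 0 0 (G j))).mono'
      (((G j).continuous.comp (by fun_prop)).mul η.continuous).aestronglyMeasurable
      (ae_of_all _ fun y ↦ ?_)
    rw [norm_mul]
    gcongr
    exact (G j).norm_le_seminorm ℝ _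
  have hDadd : ∀ j η η' x, D j (η + η') x = D j η x + D j η' x := fun j η η' x ↦ by
    simp only [D, add_apply, mul_add]
    exact integral_add (hDint j η x) (hDint j η' x)
  have hDsmul : ∀ j (r : ℝ) η x, D j (r • η) x = r * D j η x := fun j r η x ↦ by
    simp only [D, smul_apply, smul_eq_mul, mul_left_comm _ r]
    exact integral_const_mul _ _
  have hDmeas : ∀ j η, StronglyMeasurable (D j η) := fun j η ↦ by
    refine StronglyMeasurable.integral_prod_right (f := fun x y ↦ G j (y - x) * η y) ?_
    refine Continuous.stronglyMeasurable ?_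
    exact ((G j).continuous.comp (by fun_prop)).mul (η.continuous.comp (by fun_prop))
  have hbound : ∀ j η x, ‖F j x * D j η x‖ ≤ A * C * P η * (1 / 2) ^ j * u x := by
    intro j η x
    have hx : 0 < 1 + ‖x‖ := by positivity
    have hux : u x = ((1 + ‖x‖) ^ (m + 1))⁻¹ := by
      simp only [u]
      rw [Real.rpow_neg hx.le, Real.rpow_natCast]
    rw [hux, ← div_eq_mul_inv, le_div_iff₀ (by positivity), norm_mul, Real.norm_eq_abs,
      Real.norm_eq_abs]
    calc |F j x| * |D j η x| * (1 + ‖x‖) ^ (m + 1)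
        ≤ (A * (2 ^ q) ^ j * (1 + ‖x‖) ^ M) * |D j η x| * (1 + ‖x‖) ^ (m + 1) := by
          gcongr
          exact hFb j x
      _ = A * (2 ^ q) ^ j * ((1 + ‖x‖) ^ (M + (m + 1)) * |D j η x|) := by
          rw [pow_add]
          ring
      _ ≤ A * (2 ^ q) ^ j * (C * (((1 / 2) ^ j) ^ (q + 1) * P η)) :=
          mul_le_mul_of_nonneg_left (hGb j η x) (by positivity)
      _ = A * C * P η * (1 / 2) ^ j * ((2 ^ q) ^ j * ((1 / 2) ^ j) ^ q) := by
          rw [pow_succ]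
          ring
      _ = _ := by
          rw [← pow_mul, ← pow_mul, mul_comm q j, ← mul_pow]
          norm_num
  have hint : ∀ j η, Integrable (fun x ↦ F j x * D j η x) (volume.restrict S) := fun j η ↦
    ((hu.const_mul _).mono'
      (((hF j).stronglyMeasurable.mul (hDmeas j η)).aestronglyMeasurable)
      (ae_of_all _ (hbound j η))).restrict
  let T : ℕ → SchwartzMap (Fin m → ℝ) ℝ → ℝ := fun j η ↦ ∫ x in S, F j x * D j η x
  let I : ℝ := ∫ x in S, u x
  have hTb : ∀ j η, ‖T j η‖ ≤ A * C * P η * I * (1 / 2) ^ j := fun j η ↦ by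
    refine (norm_integral_le_of_norm_le (hu.restrict.const_mul (A * C * P η * (1 / 2) ^ j))
      (ae_of_all _ (hbound j η))).trans_eq ?_
    rw [integral_const_mul]
    ring
  have hgeom : ∀ η, HasSum (fun j ↦ A * C * P η * I * (1 / 2 : ℝ) ^ j) (A * C * P η * I * 2) :=
    fun η ↦ hasSum_geometric_two.mul_left _
  have hsum : ∀ η, Summable fun j ↦ ‖T j η‖ := fun η ↦
    (hgeom η).summable.of_nonneg_of_le (fun _ ↦ norm_nonneg _) fun j ↦ hTb j η
  have hTadd : ∀ j η η', T j (η + η') = T j η + T j η' := fun j η η' ↦ by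
    simp only [T, hDadd, mul_add]
    exact integral_add (hint j η) (hint j η')
  have hTsmul : ∀ j (r : ℝ) η, T j (r • η) = r * T j η := fun j r η ↦ by
    simp only [T, hDsmul, mul_left_comm _ r]
    exact integral_const_mul _ _
  have hI : 0 ≤ I := integral_nonneg fun x ↦ by positivity
  refine ⟨SchwartzMap.mkCLMtoNormedSpace (fun η ↦ ∑' j, T j η) (fun η η' ↦ ?_) (fun r η ↦ ?_)
    ⟨Finset.Iic i, A * C * I * 2, by positivity, fun η ↦ ?_⟩, fun η ↦ ⟨hsum η, ?_⟩⟩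
  · simp only [hTadd]
    exact (hsum η).of_norm.tsum_add (hsum η').of_norm
  · simp only [hTsmul, RingHom.id_apply, smul_eq_mul]
    exact tsum_mul_left
  · refine (tsum_of_norm_bounded (hgeom η) fun j ↦ hTb j η).trans_eq ?_
    change A * C * P η * I * 2 = A * C * I * 2 * P η
    ring
  · exact (hsum η).of_norm.hasSum

/-- For `φ₀, φ, ψ₀, ψ ∈ 𝓢(ℝⁿ)` supported in `{xₙ < 0}`, with `φ` and `ψ`
having vanishing moments of all orders, and any `f ∈ 𝓢'(ℝⁿ)`, the series
`Σ_j ⟨e₊(φ_j * f), ψ̌_j * η⟩` converges absolutely for every `η ∈ 𝓢(ℝⁿ)` and defines a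
tempered distribution `E_u(f)`; i.e. `E_u(f) = Σ_j ψ_j * e₊(φ_j * f)` converges weak*. -/
theorem universal_extension_series_converges (n : ℕ) (a : Fin (n+1) → ℝ)
    (ha : ∀ i, 1 ≤ a i)
    (φ₀ φ ψ₀ ψ : SchwartzMap (Fin (n+1) → ℝ) ℝ)
    (hφ₀s : tsupport ⇑φ₀ ⊆ {x : Fin (n+1) → ℝ | x (Fin.last n) < 0})
    (hφs : tsupport ⇑φ ⊆ {x : Fin (n+1) → ℝ | x (Fin.last n) < 0})
    (hψ₀s : tsupport ⇑ψ₀ ⊆ {x : Fin (n+1) → ℝ | x (Fin.last n) < 0})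
    (hψs : tsupport ⇑ψ ⊆ {x : Fin (n+1) → ℝ | x (Fin.last n) < 0})
    (hφm : VanishingMoments ⇑φ) (hψm : VanishingMoments ⇑ψ)
    (f : SchwartzMap (Fin (n+1) → ℝ) ℝ →L[ℝ] ℝ)
    -- `tr j x` is the Schwartz function `y ↦ φ_j(x − y)`, so that `(φ_j * f)(x) = f (tr j x)`
    (tr : ℕ → (Fin (n+1) → ℝ) → SchwartzMap (Fin (n+1) → ℝ) ℝ)
    (htr : ∀ (j : ℕ) (x y : Fin (n+1) → ℝ), tr j x y = anisoDil a ⇑φ₀ ⇑φ j (x - y)) :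
    ∃ E : SchwartzMap (Fin (n+1) → ℝ) ℝ →L[ℝ] ℝ,
      ∀ (η : SchwartzMap (Fin (n+1) → ℝ) ℝ)
        (c : ℕ → SchwartzMap (Fin (n+1) → ℝ) ℝ),
        -- `c j` is the Schwartz function `ψ̌_j * η : x ↦ ∫ ψ_j(y − x) η(y) dy`
        (∀ (j : ℕ) (x : Fin (n+1) → ℝ),
          c j x = ∫ y : Fin (n+1) → ℝ, anisoDil a ⇑ψ₀ ⇑ψ j (y - x) * η y) →
        Summable (fun j =>
          |∫ x in {x : Fin (n+1) → ℝ | 0 < x (Fin.last n)}, f (tr j x) * c j x|) ∧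
        HasSum (fun j =>
          ∫ x in {x : Fin (n+1) → ℝ | 0 < x (Fin.last n)}, f (tr j x) * c j x) (E η) := by
  obtain ⟨hcont, A, M, q, hA, hgrowth⟩ := exists_apply_translate_anisoDil_le a ha φ₀ φ f tr htr
  obtain ⟨-, G, hG, -⟩ := exists_anisoDil_schwartz a ha ψ₀ ψ
  obtain ⟨C, hC, hdecay⟩ :=
    exists_integral_anisoDil_mul_le a ha ψ₀ ψ hψm (q + 1) (M + (n + 1 + 1))
  obtain ⟨E, hE⟩ := exists_hasSum_setIntegral_of_decay
    {x : Fin (n + 1) → ℝ | 0 < x (Fin.last n)} (fun j x ↦ f (tr j x)) hcont G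
    (M + (n + 1 + 1), q + 1) hA hC hgrowth (by simpa only [hG] using hdecay)
  refine ⟨E, fun η c hc ↦ ?_⟩
  simp only [hc]
  simpa only [hG] using hE η

end
end
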